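/- arXiv:2209.11443 — 2 statements merged into one kernel-verified Lean document; each statement's English description precedes it below -/
import Mathlib

section
/- Let q be a prime power, n, r ≥ 1 integers, ε ∈ [0,1], and let B ⊆ ℙF_q^{n-1} satisfy |B| ≥ ε·|ℙF_q^{n-1}|. Then for any integer d with 0 ≤ d < r·q there exists a set P of monomials in F_q[x₁,…,x_n] of degree exactly d with |P| ≥ ε·C(d+n−1, n−1) such that no nonzero F_q-linear combination of the monomials in P vanishes with multiplicity at least r at every point of B. -/
/-- The `j`-th (multivariate) Hasse derivative of `Q`, i.e. the coefficient of `z^j`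
in the expansion `Q(x+z) = ∑_j Q^{(j)}(x)·z^j`. -/
noncomputable def mvHasseDeriv {F : Type*} [CommSemiring F] {n : ℕ} (j : Fin n →₀ ℕ)
    (Q : MvPolynomial (Fin n) F) : MvPolynomial (Fin n) F :=
  ∑ v ∈ Q.support, MvPolynomial.monomial (v - j)
    (Q.coeff v * ((∏ i, (v i).choose (j i) : ℕ) : F))

/-- `Q` vanishes at `a` with multiplicity at least `r`: all Hasse derivatives of weight
less than `r` vanish at `a`. -/
def VanishesWithMult {F : Type*} [CommSemiring F] {n : ℕ}
    (Q : MvPolynomial (Fin n) F) (a : Fin n → F) (r : ℕ) : Prop :=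
  ∀ j : Fin n →₀ ℕ, (j.sum fun _ e => e) < r → MvPolynomial.eval a (mvHasseDeriv j Q) = 0

theorem abs_lem {F V X G : Type*} [Field F] [AddCommGroup V] [Module F V] [FiniteDimensional F V]
    [DecidableEq X] [Group G] [Fintype G] [MulAction G X] (O : Finset X)
    (hO : ∀ (g : G), ∀ x ∈ O, g • x ∈ O) (hT : ∀ x ∈ O, ∀ y ∈ O, ∃ g : G, g • x = y)
    (K : X → Submodule F V) (hK : ⨅ x : O, K x = ⊥) (S : Finset X) (hS : S ⊆ O)
    (hinv : ∀ g : G, Module.finrank F (⨅ x : S, K (g • (x : X)) : Submodule F V)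
      = Module.finrank F (⨅ x : S, K x : Submodule F V)) :
    Module.finrank F V * S.card ≤ O.card * Module.finrank F (V ⧸ (⨅ x : S, K x)) := by
  classical
  obtain ⟨b, hb, hspan, hli⟩ := exists_linearIndependent F
    (⋃ x : O, ((K x).dualAnnihilator : Set (Module.Dual F V)))
  have hfin : Finite b := hli.finite
  have := Fintype.ofFinite b
  have htop : Submodule.span F b = ⊤ := by
    rw [hspan, Submodule.span_iUnion]
    simp only [Submodule.span_eq]
    rw [← Subspace.dualAnnihilator_iInf_eq, hK, Submodule.dualAnnihilator_bot]
  have hcard : Fintype.card b = Module.finrank F V := by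
    rw [← Subspace.dual_finrank_eq, ← finrank_top, ← htop]
    exact (finrank_span_set_eq_card hli).symm ▸ (Set.toFinset_card b).symm
  have hch : ∀ f : b, ∃ x : X, x ∈ O ∧ (f : Module.Dual F V) ∈ (K x).dualAnnihilator := by
    intro f
    obtain ⟨x, hx⟩ := Set.mem_iUnion.1 (hb f.2)
    exact ⟨x, x.2, hx⟩
  choose p hpO hp using hch
  set w : X → ℕ := fun x => (Finset.univ.filter (fun f : b => p f = x)).card with hw
  have hwO : ∑ x ∈ O, w x = Module.finrank F V := by
    rw [← hcard, ← Finset.card_univ]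
    exact (Finset.card_eq_sum_card_fiberwise (fun f _ => hpO f)).symm
  have hbd : ∀ g : G, ∑ x ∈ S, w (g • x) ≤ Module.finrank F (V ⧸ (⨅ x : S, K x)) := by
    intro g
    have h1 : ∑ x ∈ S, w (g • x) = (Finset.univ.filter (fun f : b => p f ∈ S.image (g • ·))).card := by
      rw [Finset.card_eq_sum_card_fiberwise (t := S.image (g • ·)) (f := p)]
      · rw [Finset.sum_image (fun x _ y _ h => MulAction.injective g h)]
        refine Finset.sum_congr rfl fun x hx => ?_
        simp only [hw]
        congr 1
        ext f
        simp only [Finset.mem_filter, Finset.mem_univ, true_and, Finset.mem_image]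
        constructor
        · intro h; exact ⟨⟨x, hx, h.symm⟩, h⟩
        · exact fun h => h.2
      · intro f hf
        simpa using hf
    have h2 : Module.finrank F (V ⧸ (⨅ x : S, K x)) =
        Module.finrank F (⨅ x : S, K (g • (x : X)) : Submodule F V).dualAnnihilator := by
      have e1 := Subspace.finrank_add_finrank_dualAnnihilator_eq (⨅ x : S, K (g • (x : X)))
      have e2 := Submodule.finrank_quotient_add_finrank (⨅ x : S, K x)
      have e3 := hinv g
      omega
    rw [h1, h2]
    set T := Finset.univ.filter (fun f : b => p f ∈ S.image (g • ·))
    have hmem : ∀ f : T, ((f : b) : Module.Dual F V) ∈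
        (⨅ x : S, K (g • (x : X)) : Submodule F V).dualAnnihilator := by
      intro f
      have hf := f.2
      simp only [T, Finset.mem_filter, Finset.mem_univ, true_and, Finset.mem_image] at hf
      obtain ⟨x, hx, hxe⟩ := hf
      refine Submodule.dualAnnihilator_anti ?_ (hp f)
      rw [← hxe]
      exact iInf_le (fun x : S => K (g • (x : X))) ⟨x, hx⟩
    have hli2 : LinearIndependent F (fun f : T => (⟨_, hmem f⟩ :
        (⨅ x : S, K (g • (x : X)) : Submodule F V).dualAnnihilator)) := by
      apply LinearIndependent.of_comp (Submodule.subtype _)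
      exact hli.comp (fun f : T => (f : b)) Subtype.val_injective
    have := hli2.fintype_card_le_finrank
    simpa using this
  set k := Module.finrank F (V ⧸ (⨅ x : S, K x))
  rcases S.eq_empty_or_nonempty with rfl | ⟨x0, hx0⟩
  · simp
  set c := ∑ g : G, w (g • x0) with hc
  have hconst : ∀ x ∈ O, ∑ g : G, w (g • x) = c := by
    intro x hx
    obtain ⟨h, rfl⟩ := hT x0 (hS hx0) x hx
    simp only [smul_smul]
    exact Fintype.sum_equiv (Equiv.mulRight h) _ _ (fun g => rfl)
  have hOinv : ∀ g : G, ∑ x ∈ O, w (g • x) = ∑ x ∈ O, w x := by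
    intro g
    refine Finset.sum_bij (fun x _ => g • x) (hO g) (fun x _ y _ h => MulAction.injective g h) ?_
      (fun _ _ => rfl)
    intro y hy
    exact ⟨g⁻¹ • y, hO _ _ hy, by simp⟩
  have e1 : O.card * c = Fintype.card G * Module.finrank F V := by
    calc O.card * c = ∑ x ∈ O, ∑ g : G, w (g • x) := by
          rw [Finset.sum_congr rfl hconst]; simp
      _ = _ := by rw [Finset.sum_comm, Finset.sum_congr rfl (fun g _ => hOinv g), hwO]; simp
  have e2 : S.card * c ≤ Fintype.card G * k := by
    calc S.card * c = ∑ x ∈ S, ∑ g : G, w (g • x) := by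
          rw [Finset.sum_congr rfl (fun x hx => hconst x (hS hx))]; simp
      _ ≤ _ := by
        rw [Finset.sum_comm]
        refine (Finset.sum_le_sum (fun g _ => hbd g)).trans ?_
        simp
  have hG : 0 < Fintype.card G := Fintype.card_pos
  refine Nat.le_of_mul_le_mul_left (c := Fintype.card G) ?_ hG
  calc Fintype.card G * (Module.finrank F V * S.card) = O.card * (S.card * c) := by
        rw [← mul_assoc, ← e1]; ring
    _ ≤ O.card * (Fintype.card G * k) := Nat.mul_le_mul_left _ e2
    _ = _ := by ring


open MvPolynomial in
noncomputable def shiftP {F : Type*} [CommSemiring F] {n : ℕ} (a : Fin n → F) :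
    MvPolynomial (Fin n) F →ₐ[F] MvPolynomial (Fin n) F :=
  aeval (fun i => X i + C (a i))

open MvPolynomial in
theorem coeff_prod_shift {F : Type*} [CommRing F] {n : ℕ} (a : Fin n → F) (v j : Fin n →₀ ℕ) :
    coeff j (∏ i, (X i + C (a i) : MvPolynomial (Fin n) F) ^ v i)
      = ∏ i, (((v i).choose (j i) : F) * a i ^ (v i - j i)) := by
  classical
  simp only [add_pow]
  rw [Finset.prod_univ_sum]
  have h : ∀ p : Fin n → ℕ, (∏ i, (X i ^ p i * C (a i) ^ (v i - p i) * ((v i).choose (p i) :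
      MvPolynomial (Fin n) F))) = monomial (Finsupp.equivFunOnFinite.symm p)
        (∏ i, (((v i).choose (p i) : F) * a i ^ (v i - p i))) := by
    intro p
    rw [monomial_eq, Finsupp.prod_fintype _ _ (by simp), map_prod, ← Finset.prod_mul_distrib]
    refine Finset.prod_congr rfl fun i _ => ?_
    simp
    ring
  simp only [h, coeff_sum, coeff_monomial]
  have h2 : ∀ p : Fin n → ℕ, (Finsupp.equivFunOnFinite.symm p = j) ↔ p = ⇑j := by
    intro p
    rw [Equiv.symm_apply_eq]
    rfl
  simp only [h2]
  rw [Finset.sum_ite_eq']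
  split_ifs with hj
  · rfl
  · simp only [Fintype.mem_piFinset, Finset.mem_range, not_forall, not_lt] at hj
    obtain ⟨i, hi⟩ := hj
    symm
    apply Finset.prod_eq_zero (Finset.mem_univ i)
    rw [Nat.choose_eq_zero_of_lt (by omega)]
    simp

open MvPolynomial in
theorem coeff_shiftP {F : Type*} [CommRing F] {n : ℕ} (a : Fin n → F) (j : Fin n →₀ ℕ)
    (Q : MvPolynomial (Fin n) F) :
    coeff j (shiftP a Q) = eval a (mvHasseDeriv j Q) := by
  unfold shiftP mvHasseDeriv
  rw [aeval_def, eval₂_eq', coeff_sum, map_sum]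
  refine Finset.sum_congr rfl fun v _ => ?_
  rw [algebraMap_eq, coeff_C_mul, coeff_prod_shift, eval_monomial,
    Finsupp.prod_fintype _ _ (by simp), Finset.prod_mul_distrib]
  simp [mul_assoc]

open MvPolynomial in
theorem vanishes_iff {F : Type*} [CommRing F] {n : ℕ} (a : Fin n → F) (r : ℕ)
    (Q : MvPolynomial (Fin n) F) :
    VanishesWithMult Q a r ↔ ∀ j : Fin n →₀ ℕ, j.degree < r → coeff j (shiftP a Q) = 0 := by
  unfold VanishesWithMult
  simp only [coeff_shiftP]
  rfl

open MvPolynomial in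
theorem vanishes_iff_mem {F : Type*} [CommRing F] {n : ℕ} (a : Fin n → F) (r : ℕ)
    (Q : MvPolynomial (Fin n) F) :
    VanishesWithMult Q a r ↔ shiftP a Q ∈ idealOfVars (Fin n) F ^ r := by
  rw [vanishes_iff, mem_pow_idealOfVars_iff']

open MvPolynomial in
/-- substitution of a linear map -/
noncomputable def linSub {F : Type*} [CommRing F] {n : ℕ} (A : (Fin n → F) →ₗ[F] (Fin n → F)) :
    MvPolynomial (Fin n) F →ₐ[F] MvPolynomial (Fin n) F :=
  aeval (fun i => ∑ k, C (A (Pi.single k 1) i) * X k)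

theorem lin_apply {F : Type*} [CommRing F] {n : ℕ} (A : (Fin n → F) →ₗ[F] (Fin n → F))
    (x : Fin n → F) (i : Fin n) : A x i = ∑ k, A (Pi.single k 1) i * x k := by
  conv_lhs => rw [← Finset.univ_sum_single x, map_sum, Finset.sum_apply]
  refine Finset.sum_congr rfl fun k _ => ?_
  have : Pi.single k (x k) = x k • (Pi.single k 1 : Fin n → F) := by
    rw [← Pi.single_smul]; simp
  rw [this, map_smul]; simp [mul_comm]

open MvPolynomial in
theorem linSub_comp {F : Type*} [CommRing F] {n : ℕ} (A B : (Fin n → F) →ₗ[F] (Fin n → F)) (Q) :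
    linSub A (linSub B Q) = linSub (B ∘ₗ A) Q := by
  have : (linSub A).comp (linSub B) = linSub (B ∘ₗ A) := by
    apply MvPolynomial.algHom_ext
    intro i
    simp only [linSub, AlgHom.comp_apply, aeval_X, map_sum, map_mul, LinearMap.comp_apply, 
      algHom_C, algebraMap_eq]
    simp only [Finset.mul_sum]
    rw [Finset.sum_comm]
    refine Finset.sum_congr rfl fun k _ => ?_
    rw [lin_apply B, map_sum, Finset.sum_mul]
    simp [mul_assoc]
  exact DFunLike.congr_fun this Q

open MvPolynomial in
theorem linSub_id {F : Type*} [CommRing F] {n : ℕ}  (Q : MvPolynomial (Fin n) F) :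
    linSub LinearMap.id Q = Q := by
  have : (linSub LinearMap.id) = AlgHom.id F (MvPolynomial (Fin n) F) := by
    apply MvPolynomial.algHom_ext
    intro i
    simp [linSub, Pi.single_apply]
  rw [this]; rfl

open MvPolynomial in
theorem linSub_homog {F : Type*} [CommRing F] {n d : ℕ} (A : (Fin n → F) →ₗ[F] (Fin n → F))
    (Q : MvPolynomial (Fin n) F) (hQ : Q.IsHomogeneous d) : (linSub A Q).IsHomogeneous d := by
  have := hQ.aeval (n := 1) (fun i => ∑ k, C (A (Pi.single k 1) i) * X k) ?_
  · rwa [one_mul] at this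
  · intro i
    apply IsHomogeneous.sum
    intro k _
    exact (isHomogeneous_X _ _).C_mul _

open MvPolynomial in
theorem shift_linSub {F : Type*} [CommRing F] {n : ℕ} (A : (Fin n → F) →ₗ[F] (Fin n → F))
    (x : Fin n → F) (Q) : shiftP x (linSub A Q) = linSub A (shiftP (A x) Q) := by
  have : (shiftP x).comp (linSub A) = (linSub A).comp (shiftP (A x)) := by
    apply MvPolynomial.algHom_ext
    intro i
    have h := lin_apply A x i
    simp only [AlgHom.comp_apply, shiftP, aeval_X, map_add, algHom_C, algebraMap_eq, linSub,
      map_sum, map_mul, mul_add, Finset.sum_add_distrib, h]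
  exact DFunLike.congr_fun this Q

open MvPolynomial in
theorem vanishes_linSub {F : Type*} [CommRing F] {n r : ℕ} (A : (Fin n → F) →ₗ[F] (Fin n → F))
    (x : Fin n → F) (Q) (h : VanishesWithMult Q (A x) r) : VanishesWithMult (linSub A Q) x r := by
  rw [vanishes_iff_mem] at *
  rw [shift_linSub]
  have h2 := Ideal.mem_map_of_mem (linSub A) h
  rw [Ideal.map_pow] at h2
  refine Ideal.pow_right_mono ?_ r h2
  rw [Ideal.map_span, Ideal.span_le]
  rintro _ ⟨_, ⟨i, rfl⟩, rfl⟩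
  simp only [linSub, aeval_X]
  exact Ideal.sum_mem _ fun k _ => Ideal.mul_mem_left _ _ (Ideal.subset_span ⟨k, rfl⟩)

open MvPolynomial in
theorem linSub_smul {F : Type*} [CommRing F] {n d : ℕ} (c : F)
    (Q : MvPolynomial (Fin n) F) (hQ : Q.IsHomogeneous d) :
    linSub (c • LinearMap.id) Q = c ^ d • Q := by
  conv_rhs => rw [Q.as_sum]
  conv_lhs => rw [Q.as_sum]
  rw [map_sum, Finset.smul_sum]
  refine Finset.sum_congr rfl fun v hv => ?_
  have hd : v.degree = d := by
    rw [Finsupp.degree_eq_weight_one]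
    exact hQ (mem_support_iff.1 hv)
  have hX : ∀ i, linSub (c • LinearMap.id) (X i : MvPolynomial (Fin n) F) = C c * X i := by
    intro i
    simp [linSub, Pi.single_apply, apply_ite C, ite_mul]
  rw [monomial_eq, map_mul, Finsupp.prod_fintype _ _ (by simp), map_prod]
  simp only [map_pow, hX, mul_pow, Finset.prod_mul_distrib, Finset.prod_pow_eq_pow_sum]
  rw [← hd, Finsupp.degree_eq_sum, algHom_C, smul_eq_C_mul]
  simp
  ring

open MvPolynomial in
theorem finSucc_shift {F : Type*} [CommRing F] {m : ℕ} (b : F) (a : Fin m → F)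
    (Q : MvPolynomial (Fin (m + 1)) F) :
    finSuccEquiv F m (shiftP (Fin.cons b a) Q) =
      ((finSuccEquiv F m Q).map (shiftP a).toRingHom).comp
        (Polynomial.X + Polynomial.C (C b)) := by
  induction Q using MvPolynomial.induction_on with
  | C c => simp [shiftP, finSuccEquiv_apply]
  | add p q hp hq => simp [hp, hq]
  | mul_X p i hp =>
    have hX : finSuccEquiv F m (shiftP (Fin.cons b a) (X i)) =
        ((finSuccEquiv F m (X i)).map (shiftP a).toRingHom).comp
          (Polynomial.X + Polynomial.C (C b)) := by
      refine Fin.cases ?_ (fun i => ?_) i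
      · simp [shiftP, finSuccEquiv_apply]
      · simp [shiftP, finSuccEquiv_apply]
    rw [map_mul, map_mul, hp, hX, map_mul, Polynomial.map_mul, Polynomial.mul_comp]

open Polynomial in
noncomputable def mapLin {F R : Type*} [CommRing F] [CommRing R] [Algebra F R] (l : R →ₗ[F] F)
    (p : R[X]) : F[X] := p.sum (fun i c => monomial i (l c))

open Polynomial in
theorem mapLin_coeff {F R : Type*} [CommRing F] [CommRing R] [Algebra F R] (l : R →ₗ[F] F)
    (p : R[X]) (k : ℕ) : (mapLin l p).coeff k = l (p.coeff k) := by
  unfold mapLin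
  rw [Polynomial.sum_def, finsetSum_coeff]
  simp only [coeff_monomial]
  rw [Finset.sum_ite_eq']
  split_ifs with h
  · rfl
  · rw [notMem_support_iff.1 h, map_zero]

open Polynomial in
theorem mapLin_comp {F R : Type*} [CommRing F] [CommRing R] [Algebra F R] (l : R →ₗ[F] F)
    (p : R[X]) (b : F) :
    mapLin l (p.comp (X + C (algebraMap F R b))) = (mapLin l p).comp (X + C b) := by
  have hadd : ∀ p q : R[X], mapLin l (p + q) = mapLin l p + mapLin l q := by
    intro p q; ext k; simp [mapLin_coeff]
  induction p using Polynomial.induction_on' with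
  | add p q hp hq => rw [add_comp, hadd, hp, hq, hadd, add_comp]
  | monomial i c =>
    have h1 : mapLin l (monomial i c) = monomial i (l c) := by
      ext k; simp only [mapLin_coeff, coeff_monomial]; split_ifs <;> simp
    rw [h1]
    ext k
    rw [mapLin_coeff, monomial_comp, monomial_comp, coeff_C_mul, coeff_C_mul, coeff_X_add_C_pow,
      coeff_X_add_C_pow]
    have : c * (algebraMap F R b ^ (i - k) * (i.choose k : R))
        = (b ^ (i - k) * (i.choose k : F)) • c := by
      rw [Algebra.smul_def]; simp [mul_comm]
    rw [this, map_smul]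
    simp [mul_comm]

open Polynomial in
theorem univ_bound {F : Type*} [Field F] [Fintype F] (u : F[X]) (hu : u ≠ 0) (s : ℕ)
    (h : ∀ b : F, ∀ k < s, (u.comp (X + C b)).coeff k = 0) :
    s * Fintype.card F ≤ u.natDegree := by
  classical
  have h1 : ∀ b : F, s ≤ u.roots.count b := by
    intro b
    rw [count_roots, le_rootMultiplicity_iff hu, X_sub_C_pow_dvd_iff, X_pow_dvd_iff]
    exact h b
  calc s * Fintype.card F = ∑ b : F, s := by simp [mul_comm]
    _ ≤ ∑ b : F, u.roots.count b := Finset.sum_le_sum fun b _ => h1 b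
    _ = u.roots.card := Multiset.sum_count_eq_card (fun _ _ => Finset.mem_univ _)
    _ ≤ _ := card_roots' u

theorem degree_cons' {m : ℕ} (k : ℕ) (j : Fin m →₀ ℕ) : (j.cons k).degree = k + j.degree := by
  simp [Finsupp.degree_eq_sum, Fin.sum_univ_succ]

open MvPolynomial in
theorem sz {F : Type*} [Field F] [Fintype F] (m : ℕ) : ∀ (r : ℕ) (Q : MvPolynomial (Fin m) F)
    (_ : ∀ j, coeff j Q ≠ 0 → j.degree < r * Fintype.card F)
    (_ : ∀ a, VanishesWithMult Q a r), Q = 0 := by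
  induction m with
  | zero =>
    intro r Q hd hv
    by_contra hQ
    obtain ⟨j, hj⟩ := ne_zero_iff.1 hQ
    have hr : 0 < r := by
      rcases Nat.eq_zero_or_pos r with rfl | h
      · simpa using hd j hj
      · exact h
    have hs : shiftP (0 : Fin 0 → F) Q = Q := by
      have : shiftP (0 : Fin 0 → F) = AlgHom.id F _ := by
        apply MvPolynomial.algHom_ext
        intro i; exact i.elim0
      rw [this]; rfl
    have := (vanishes_iff _ _ _).1 (hv 0) j (by simpa [Finsupp.degree_eq_sum] using hr)
    rw [hs] at this
    exact hj this
  | succ m ih =>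
    intro r Q hd hv
    by_contra hQ
    set p := finSuccEquiv F m Q with hp
    have hp0 : p ≠ 0 := by
      rw [hp]; exact (map_ne_zero_iff _ (finSuccEquiv F m).injective).2 hQ
    set t := p.natDegree with ht
    have hlc : p.coeff t ≠ 0 := by
      rw [ht]; exact Polynomial.leadingCoeff_ne_zero.2 hp0
    apply hlc
    have hq : 0 < Fintype.card F := Fintype.card_pos
    have hdiv : Fintype.card F * (t / Fintype.card F) ≤ t := Nat.mul_div_le _ _
    apply ih (r - t / Fintype.card F)
    · intro j hj
      rw [hp, finSuccEquiv_coeff_coeff] at hj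
      have := hd _ hj
      rw [degree_cons'] at this
      rw [Nat.sub_mul, mul_comm (t / _)]
      omega
    · intro a
      rw [vanishes_iff]
      intro j hj
      by_contra hne
      set u := mapLin (lcoeff F j) (p.map (shiftP a).toRingHom) with hu
      have huc : ∀ k, u.coeff k = coeff j (shiftP a (p.coeff k)) := by
        intro k; rw [hu, mapLin_coeff, Polynomial.coeff_map]; rfl
      have hu0 : u ≠ 0 := by
        intro h
        apply hne
        rw [← huc, h]; simp
      have hut : u.natDegree ≤ t := by
        rw [Polynomial.natDegree_le_iff_coeff_eq_zero]
        intro k hk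
        rw [huc, Polynomial.coeff_eq_zero_of_natDegree_lt hk]; simp
      have hb := univ_bound u hu0 (r - j.degree) (by
        intro b k hk
        have h1 := (vanishes_iff _ _ _).1 (hv (Fin.cons b a)) (j.cons k) (by
          rw [degree_cons']; omega)
        rw [← finSuccEquiv_coeff_coeff, finSucc_shift] at h1
        rw [hu, ← mapLin_comp, mapLin_coeff]
        exact h1)
      have h3 : t / Fintype.card F + 1 ≤ r - j.degree := by omega
      have h4 := Nat.mul_le_mul_right (Fintype.card F) h3
      have h5 := Nat.lt_mul_div_succ t hq
      rw [mul_comm] at h5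
      omega

theorem homog_deg {F : Type*} [CommRing F] {n d : ℕ} {Q : MvPolynomial (Fin n) F}
    (hQ : Q.IsHomogeneous d) {v : Fin n →₀ ℕ} (hv : Q.coeff v ≠ 0) : v.degree = d := by
  rw [Finsupp.degree_eq_weight_one]
  exact hQ hv

open MvPolynomial in
theorem sz_homog {F : Type*} [Field F] [Fintype F] {n r d : ℕ} (hn : 1 ≤ n)
    (hd : d < r * Fintype.card F) (Q : MvPolynomial (Fin n) F) (hQ : Q.IsHomogeneous d)
    (hv : ∀ a, a ≠ 0 → VanishesWithMult Q a r) : Q = 0 := by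
  obtain ⟨m, rfl⟩ : ∃ m, n = m + 1 := ⟨n - 1, by omega⟩
  set p := finSuccEquiv F m Q with hp
  have hc : ∀ j, coeff j (p.eval 1) = ∑ k ∈ p.support, coeff (j.cons k) Q := by
    intro j
    rw [Polynomial.eval_eq_sum, Polynomial.sum_def, coeff_sum]
    refine Finset.sum_congr rfl fun k _ => ?_
    rw [one_pow, mul_one, hp, finSuccEquiv_coeff_coeff]
  have h0 : p.eval 1 = 0 := by
    apply sz m r
    · intro j hj
      rw [hc] at hj
      obtain ⟨k, _, hk⟩ := Finset.exists_ne_zero_of_sum_ne_zero hj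
      have := homog_deg hQ hk
      rw [degree_cons'] at this
      omega
    · intro a
      rw [vanishes_iff]
      intro j hj
      have h1 := (vanishes_iff _ _ _).1 (hv (Fin.cons 1 a) (by
        intro h; simpa using congrFun h 0)) (j.cons 0) (by rw [degree_cons']; omega)
      rw [← finSuccEquiv_coeff_coeff, finSucc_shift, Polynomial.coeff_zero_eq_eval_zero,
        Polynomial.eval_comp] at h1
      rw [← h1]
      congr 1
      have e : Polynomial.eval 0 (Polynomial.X + Polynomial.C (C 1 : MvPolynomial (Fin m) F))
          = (shiftP a).toRingHom 1 := by
        rw [Polynomial.eval_add, Polynomial.eval_X, Polynomial.eval_C, zero_add, map_one, map_one]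
      rw [e, Polynomial.eval_map, Polynomial.eval₂_at_apply]
      rfl
  by_contra hne
  obtain ⟨v, hv⟩ := ne_zero_iff.1 hne
  apply hv
  have h1 := hc v.tail
  rw [h0, coeff_zero] at h1
  have hvv : v.tail.cons (v 0) = v := Finsupp.cons_tail v
  have h2 : ∑ k ∈ p.support, coeff (v.tail.cons k) Q = coeff (v.tail.cons (v 0)) Q := by
    apply Finset.sum_eq_single
    · intro k _ hk
      by_contra h
      have e1 := homog_deg hQ h
      have e2 := homog_deg hQ hv
      rw [← hvv, degree_cons'] at e2
      rw [degree_cons'] at e1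
      omega
    · intro h
      rw [Polynomial.notMem_support_iff] at h
      rw [← finSuccEquiv_coeff_coeff, ← hp, h, coeff_zero]
  rw [hvv] at h2
  rw [← h2, ← h1]

open MvPolynomial in
theorem vanishes_smul {F : Type*} [Field F] {n r d : ℕ} (c : Fˣ) (w : Fin n → F)
    (Q : MvPolynomial (Fin n) F) (hQ : Q.IsHomogeneous d) (h : VanishesWithMult Q w r) :
    VanishesWithMult Q ((c : F) • w) r := by
  have h1 := vanishes_linSub (r := r) ((c : F)⁻¹ • LinearMap.id) ((c : F) • w) Q (by
    simpa [smul_smul] using h)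
  rw [linSub_smul _ _ hQ, vanishes_iff_mem, map_smul] at h1
  rw [vanishes_iff_mem]
  have h2 := Submodule.smul_of_tower_mem (idealOfVars (Fin n) F ^ r) ((c : F) ^ d) h1
  rwa [smul_smul, ← mul_pow, mul_inv_cancel₀ c.ne_zero, one_pow, one_smul] at h2

theorem exists_equiv_map {F V : Type*} [Field F] [AddCommGroup V] [Module F V]
    [FiniteDimensional F V] (x y : V) (hx : x ≠ 0) (hy : y ≠ 0) : ∃ g : V ≃ₗ[F] V, g x = y := by
  obtain ⟨g, hg⟩ := Submodule.exists_linearEquiv_restrict_eq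
    ((LinearEquiv.toSpanNonzeroSingleton F V x hx).symm.trans
      (LinearEquiv.toSpanNonzeroSingleton F V y hy))
  refine ⟨g, ?_⟩
  have := hg ⟨x, Submodule.mem_span_singleton_self x⟩
  rw [← this]
  have e : (LinearEquiv.toSpanNonzeroSingleton F V x hx).symm
      ⟨x, Submodule.mem_span_singleton_self x⟩ = 1 := by
    rw [LinearEquiv.symm_apply_eq]
    ext; simp
  rw [LinearEquiv.trans_apply, e]
  simp

open MvPolynomial in
/-- homogeneous polynomials vanishing at `x` with multiplicity `r` -/
noncomputable def KK (F : Type*) [Field F] (n r d : ℕ) (x : Fin n → F) :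
    Submodule F (homogeneousSubmodule (Fin n) F d) :=
  ((idealOfVars (Fin n) F ^ r).restrictScalars F).comap
    ((shiftP x).toLinearMap ∘ₗ (homogeneousSubmodule (Fin n) F d).subtype)

open MvPolynomial in
theorem mem_KK {F : Type*} [Field F] {n r d : ℕ} (x : Fin n → F)
    (Q : homogeneousSubmodule (Fin n) F d) :
    Q ∈ KK F n r d x ↔ VanishesWithMult (Q : MvPolynomial (Fin n) F) x r := by
  rw [vanishes_iff_mem]; rfl

open MvPolynomial in
noncomputable def linSubV {F : Type*} [Field F] {n : ℕ} (d : ℕ)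
    (g : (Fin n → F) ≃ₗ[F] (Fin n → F)) :
    homogeneousSubmodule (Fin n) F d ≃ₗ[F] homogeneousSubmodule (Fin n) F d where
  toFun Q := ⟨linSub g.toLinearMap Q, linSub_homog _ _ Q.2⟩
  invFun Q := ⟨linSub g.symm.toLinearMap Q, linSub_homog _ _ Q.2⟩
  map_add' p q := by ext1; simp
  map_smul' c q := by ext1; simp
  left_inv Q := by
    ext1
    simp only [linSub_comp]
    rw [LinearEquiv.comp_coe, LinearEquiv.symm_trans_self, LinearEquiv.refl_toLinearMap, linSub_id]
  right_inv Q := by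
    ext1
    simp only [linSub_comp]
    rw [LinearEquiv.comp_coe, LinearEquiv.self_trans_symm, LinearEquiv.refl_toLinearMap, linSub_id]

open MvPolynomial in
theorem linSubV_mem {F : Type*} [Field F] {n r d : ℕ} (g : (Fin n → F) ≃ₗ[F] (Fin n → F))
    (x : Fin n → F) (Q : homogeneousSubmodule (Fin n) F d) :
    linSubV d g Q ∈ KK F n r d x ↔ Q ∈ KK F n r d (g x) := by
  rw [mem_KK, mem_KK]
  constructor
  · intro h
    have h1 := vanishes_linSub g.symm.toLinearMap (g x) (linSub g.toLinearMap Q.1) (r := r)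
      (by rw [LinearEquiv.coe_coe, LinearEquiv.symm_apply_apply]; exact h)
    rwa [linSub_comp, LinearEquiv.comp_coe, LinearEquiv.symm_trans_self,
      LinearEquiv.refl_toLinearMap, linSub_id] at h1
  · intro h
    exact vanishes_linSub g.toLinearMap x Q.1 h

open MvPolynomial in
theorem main_aux {F : Type*} [Field F] [Fintype F] [DecidableEq F] {n r d : ℕ} (hn : 1 ≤ n)
    (hd : d < r * Fintype.card F) (O : Finset (Fin n → F)) (hO : ∀ x, x ∈ O ↔ x ≠ 0)
    (S : Finset (Fin n → F)) (hS : S ⊆ O) :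
    Module.finrank F (homogeneousSubmodule (Fin n) F d) * S.card ≤
      O.card * Module.finrank F
        (homogeneousSubmodule (Fin n) F d ⧸ (⨅ x : S, KK F n r d x)) := by
  classical
  have : Module.Finite F (homogeneousSubmodule (Fin n) F d) :=
    Module.Finite.iff_fg.2 (homogeneousSubmodule_fg _ _ d)
  have : Finite ((Fin n → F) ≃ₗ[F] (Fin n → F)) :=
    Finite.of_injective (fun g => (g : (Fin n → F) → (Fin n → F))) DFunLike.coe_injective
  have := Fintype.ofFinite ((Fin n → F) ≃ₗ[F] (Fin n → F))
  refine abs_lem (G := (Fin n → F) ≃ₗ[F] (Fin n → F)) O ?_ ?_ (KK F n r d) ?_ S hS ?_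
  · intro g x hx
    rw [hO] at *
    simpa using hx
  · intro x hx y hy
    rw [hO] at *
    exact exists_equiv_map x y hx hy
  · rw [eq_bot_iff]
    intro Q hQ
    rw [Submodule.mem_iInf] at hQ
    rw [Submodule.mem_bot]
    ext1
    refine sz_homog hn hd Q.1 Q.2 ?_
    intro a ha
    exact (mem_KK _ _).1 (hQ ⟨a, (hO a).2 ha⟩)
  · intro g
    have : (⨅ x : S, KK F n r d (g • (x : Fin n → F))).map (linSubV d g).toLinearMap
        = ⨅ x : S, KK F n r d x := by
      ext Q
      rw [Submodule.mem_map_equiv]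
      simp only [Submodule.mem_iInf]
      refine forall_congr' fun x => ?_
      have := linSubV_mem (r := r) g x ((linSubV d g).symm Q)
      rw [LinearEquiv.apply_symm_apply] at this
      exact this.symm
    rw [← this]
    exact (LinearEquiv.finrank_map_eq (linSubV d g) _).symm

theorem stmt7 (F : Type) [Field F] [Fintype F] [DecidableEq F] (n r : ℕ)
    (hn : 1 ≤ n) (hr : 1 ≤ r) (ε : ℝ) (hε0 : 0 ≤ ε) (hε1 : ε ≤ 1)
    (Pr : Finset (Fin n → F)) (hPr0 : ∀ u ∈ Pr, u ≠ 0)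
    (hPr : ∀ u : Fin n → F, u ≠ 0 → ∃! w, w ∈ Pr ∧ ∃ c : Fˣ, u = (c : F) • w)
    (B : Finset (Fin n → F)) (hB : B ⊆ Pr) (hBcard : ε * (Pr.card : ℝ) ≤ (B.card : ℝ))
    (d : ℕ) (hd : d < r * Fintype.card F) :
    ∃ P : Finset (Fin n →₀ ℕ),
      (∀ v ∈ P, (v.sum fun _ e => e) = d) ∧
      ε * ((d + n - 1).choose (n - 1) : ℝ) ≤ (P.card : ℝ) ∧
      ∀ c : (Fin n →₀ ℕ) → F, (∃ v ∈ P, c v ≠ 0) →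
        ∃ b ∈ B, ¬ VanishesWithMult (∑ v ∈ P, MvPolynomial.monomial v (c v)) b r := by
  classical
  set V := MvPolynomial.homogeneousSubmodule (Fin n) F d with hV
  have : Module.Finite F V :=
    Module.Finite.iff_fg.2 (MvPolynomial.homogeneousSubmodule_fg _ _ d)
  set sc : Fˣ × (Fin n → F) → (Fin n → F) := fun p => (p.1 : F) • p.2 with hsc
  have hscne : ∀ (c : Fˣ) (w : Fin n → F), w ∈ Pr → (c : F) • w ≠ 0 := fun c w hw =>
    smul_ne_zero c.ne_zero (hPr0 w hw)
  have hinj : ∀ T ⊆ Pr, Set.InjOn sc ((Finset.univ ×ˢ T : Finset (Fˣ × (Fin n → F))) : Set _) := by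
    rintro T hT ⟨c, w⟩ h1 ⟨c', w'⟩ h2 h
    simp only [Finset.coe_product, Set.mem_prod, Finset.mem_coe, Finset.mem_univ, true_and] at h1 h2
    simp only [hsc] at h
    have hw : w = w' := (hPr _ (hscne c w (hT h1))).unique ⟨hT h1, c, rfl⟩ ⟨hT h2, c', h⟩
    subst hw
    have : (c : F) = c' := smul_left_injective F (hPr0 w (hT h1)) h
    rw [Units.ext this]
  set O := (Finset.univ ×ˢ Pr).image sc with hOdef
  set S := (Finset.univ ×ˢ B).image sc with hSdef
  have hO : ∀ x, x ∈ O ↔ x ≠ 0 := by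
    intro x
    simp only [hOdef, Finset.mem_image, Finset.mem_product, Finset.mem_univ, true_and, Prod.exists]
    constructor
    · rintro ⟨c, w, hw, rfl⟩
      exact hscne c w hw
    · intro hx
      obtain ⟨w, ⟨hw, c, hc⟩, -⟩ := hPr x hx
      exact ⟨c, w, hw, hc.symm⟩
  have hSO : S ⊆ O := Finset.image_subset_image (Finset.product_subset_product_right hB)
  have hOc : O.card = Fintype.card Fˣ * Pr.card := by
    rw [hOdef, Finset.card_image_of_injOn (hinj Pr subset_rfl), Finset.card_product,
      Finset.card_univ]
  have hSc : S.card = Fintype.card Fˣ * B.card := by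
    rw [hSdef, Finset.card_image_of_injOn (hinj B hB), Finset.card_product, Finset.card_univ]
  have hmain := main_aux (r := r) (d := d) hn hd O hO S hSO
  set K := ⨅ x : S, KK F n r d x with hK
  set k := Module.finrank F (V ⧸ K) with hk
  -- monomials
  set M := (Finset.univ : Finset (Fin n)).finsuppAntidiag d with hM
  have hMd : ∀ v : M, (v : Fin n →₀ ℕ).degree = d := by
    intro v
    have := (Finset.mem_finsuppAntidiag.1 v.2).1
    rw [Finsupp.degree_eq_sum]; exact this
  have hMm : ∀ v : Fin n →₀ ℕ, v.degree = d → v ∈ M := by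
    intro v hv
    rw [hM, Finset.mem_finsuppAntidiag]
    exact ⟨by rw [Finsupp.degree_eq_sum] at hv; exact hv, Finset.subset_univ _⟩
  have hMcard : M.card = (d + n - 1).choose (n - 1) := by
    rw [hM, Finset.card_finsuppAntidiag_nat_eq_choose, Finset.card_univ, Fintype.card_fin]
    rw [show n + d - 1 = d + (n - 1) by omega, show d + n - 1 = d + (n - 1) by omega,
      Nat.choose_symm_add]
  set m : M → V := fun v => ⟨MvPolynomial.monomial v 1,
    MvPolynomial.isHomogeneous_monomial _ (hMd v)⟩ with hm
  have hmli : LinearIndependent F m := by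
    apply LinearIndependent.of_comp V.subtype
    have := (MvPolynomial.basisMonomials (Fin n) F).linearIndependent.comp
      (fun v : M => (v : Fin n →₀ ℕ)) Subtype.val_injective
    rw [MvPolynomial.coe_basisMonomials] at this
    exact this
  have hmspan : Submodule.span F (Set.range m) = ⊤ := by
    rw [eq_top_iff]
    rintro Q -
    have : Q = ∑ v : M, (Q : MvPolynomial (Fin n) F).coeff v • m v := by
      ext1
      rw [AddSubmonoidClass.coe_finsetSum]
      ext v
      simp only [hm, Submodule.coe_smul, MvPolynomial.coeff_sum, MvPolynomial.coeff_smul,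
        MvPolynomial.coeff_monomial, smul_eq_mul, mul_ite, mul_one, mul_zero]
      rw [Finset.sum_coe_sort M (fun w => if w = v then MvPolynomial.coeff w
        (Q : MvPolynomial (Fin n) F) else 0), Finset.sum_ite_eq']
      split_ifs with h
      · rfl
      · by_contra hne
        exact h (hMm v (homog_deg Q.2 hne))
    rw [this]
    exact Submodule.sum_mem _ fun v _ => Submodule.smul_mem _ _ (Submodule.subset_span ⟨v, rfl⟩)
  have hdim : M.card ≤ Module.finrank F V := by
    simpa using hmli.fintype_card_le_finrank
  obtain ⟨κ, a, ha, hsp, hli⟩ := exists_linearIndependent' F (K.mkQ ∘ m)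
  have : Finite κ := Finite.of_injective a ha
  have := Fintype.ofFinite κ
  have hκ : Fintype.card κ = k := by
    rw [← finrank_span_eq_card hli, hsp, Set.range_comp, Submodule.span_image, hmspan,
      Submodule.map_top, Submodule.range_mkQ, finrank_top]
  have hainj : Function.Injective (fun i : κ => (a i : Fin n →₀ ℕ)) :=
    Subtype.val_injective.comp ha
  refine ⟨Finset.univ.image (fun i : κ => (a i : Fin n →₀ ℕ)), ?_, ?_, ?_⟩
  · intro v hv
    obtain ⟨i, -, rfl⟩ := Finset.mem_image.1 hv
    exact hMd (a i)
  · rw [Finset.card_image_of_injective _ hainj, Finset.card_univ, hκ, ← hMcard]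
    have hPpos : 0 < Pr.card := by
      obtain ⟨w, ⟨hw, -⟩, -⟩ := hPr (fun _ => 1) (by
        intro h
        exact one_ne_zero (congrFun h ⟨0, hn⟩))
      exact Finset.card_pos.2 ⟨w, hw⟩
    have hu : 0 < Fintype.card Fˣ := Fintype.card_pos
    have h1 : M.card * B.card ≤ Pr.card * k := by
      refine Nat.le_of_mul_le_mul_left (c := Fintype.card Fˣ) ?_ hu
      calc Fintype.card Fˣ * (M.card * B.card) = M.card * S.card := by rw [hSc]; ring
        _ ≤ Module.finrank F V * S.card := Nat.mul_le_mul_right _ hdim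
        _ ≤ O.card * k := hmain
        _ = _ := by rw [hOc]; ring
    have h2 : (M.card : ℝ) * B.card ≤ Pr.card * k := by exact_mod_cast h1
    have hP : (0 : ℝ) < Pr.card := by exact_mod_cast hPpos
    have hMn : (0 : ℝ) ≤ M.card := Nat.cast_nonneg _
    refine le_of_mul_le_mul_left ?_ hP
    calc (Pr.card : ℝ) * (ε * M.card) = M.card * (ε * Pr.card) := by ring
      _ ≤ M.card * B.card := mul_le_mul_of_nonneg_left hBcard hMn
      _ ≤ _ := h2
  · rintro c ⟨v, hv, hcv⟩
    by_contra hcon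
    push Not at hcon
    obtain ⟨i, -, rfl⟩ := Finset.mem_image.1 hv
    rw [Finset.sum_image (fun x _ y _ h => hainj h)] at hcon
    set Q : V := ∑ i : κ, c (a i) • m (a i) with hQ
    have hQe : (Q : MvPolynomial (Fin n) F) = ∑ i : κ, MvPolynomial.monomial (a i).1 (c (a i)) := by
      rw [hQ, AddSubmonoidClass.coe_finsetSum]
      refine Finset.sum_congr rfl fun i _ => ?_
      simp [hm, MvPolynomial.smul_monomial]
    have hQK : Q ∈ K := by
      rw [hK, Submodule.mem_iInf]
      rintro ⟨x, hx⟩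
      rw [mem_KK]
      simp only [hSdef, Finset.mem_image, Finset.mem_product, Finset.mem_univ, true_and,
        Prod.exists] at hx
      obtain ⟨u, w, hw, rfl⟩ := hx
      refine vanishes_smul u w _ Q.2 ?_
      rw [hQe]
      exact hcon w hw
    have h0 : ∑ i : κ, c (a i) • (K.mkQ ∘ m ∘ a) i = 0 := by
      have := (Submodule.Quotient.mk_eq_zero K).2 hQK
      rw [← Submodule.mkQ_apply, hQ, map_sum] at this
      simpa using this
    exact hcv (Fintype.linearIndependent_iff.1 hli (fun i => c (a i)) h0 i)
end

section
/- Let q be a prime power, n ≥ 1, let f : F_qⁿ → ℕ, let w = max_{u ∈ ℙF_q^{n-1}} f*(u), and for 1 ≤ i ≤ w let ε_{≥i} = |{u ∈ ℙF_q^{n-1} : f*(u) ≥ i}| / |ℙF_q^{n-1}|. For an integer m ≥ 2q set r_i = ⌈(m·i + 1)/(2q − 1) − 1⌉ and d_i = r_i·q − 1 for 0 ≤ i ≤ w (so r₀ = 0 and d₀ = −1). Then ∑_{i=1}^{w} ε_{≥i} · ∑_{j = d_{i-1}+1}^{d_i} C(j+n−1, n−1) ≤ ∑_{x ∈ F_qⁿ}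 C(m·f(x)+n−1, n). -/
/-- The maximal function of `f : F_qⁿ → ℕ` in direction `u`:
`f*(u) = max_a ∑_{t ∈ F_q} f(a + t·u)`. -/
def fstarF {F : Type*} [Field F] [Fintype F] {n : ℕ}
    (f : (Fin n → F) → ℕ) (u : Fin n → F) : ℕ :=
  Finset.univ.sup fun a : Fin n → F => ∑ t : F, f (a + t • u)
open MvPolynomial
namespace S8

variable {F : Type*} [Field F] {σ τ : Type*}

/-- translation -/
noncomputable def tr (b : σ → F) : MvPolynomial σ F →ₐ[F] MvPolynomial σ F :=
  aeval (fun i => X i + C (b i))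

/-- vanishing to order at least `M` at `b` -/
def Mult (b : σ → F) (M : ℕ) (P : MvPolynomial σ F) : Prop :=
  ∀ α : σ →₀ ℕ, α.degree < M → coeff α (tr b P) = 0

lemma mult_iff (b : σ → F) (M : ℕ) (P : MvPolynomial σ F) :
    Mult b M P ↔ tr b P ∈ idealOfVars σ F ^ M := by
  rw [mem_pow_idealOfVars_iff']
  rfl

lemma Mult.map {B : Type*} [CommRing B] [Algebra F B] {b : σ → F} {M : ℕ}
    {P : MvPolynomial σ F} (h : Mult b M P) (θ : MvPolynomial σ F →ₐ[F] B) (J : Ideal B)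
    (hJ : ∀ i, θ (X i) - algebraMap F B (b i) ∈ J) : θ P ∈ J ^ M := by
  rw [mult_iff] at h
  have e : θ P = aeval (fun i => θ (X i) - algebraMap F B (b i)) (tr b P) := by
    have : θ = (aeval (fun i => θ (X i) - algebraMap F B (b i))).comp (tr b) := by
      apply MvPolynomial.algHom_ext
      intro i
      simp [tr]
    exact congrArg (fun f => f P) this
  rw [e]
  have h2 := Ideal.mem_map_of_mem
    (aeval (fun i => θ (X i) - algebraMap F B (b i)) : MvPolynomial σ F →ₐ[F] B) h
  rw [Ideal.map_pow] at h2
  refine Ideal.pow_right_mono ?_ M h2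
  rw [idealOfVars, Ideal.map_span, Ideal.span_le]
  rintro _ ⟨_, ⟨i, rfl⟩, rfl⟩
  simpa using hJ i

/-- the ideal of the origin on the line -/
noncomputable def JI (τ : Type*) (t₀ : F) : Ideal (MvPolynomial τ (Polynomial F)) :=
  Ideal.span (insert (C (Polynomial.X - Polynomial.C t₀)) (Set.range X))

lemma JI_pow (t₀ : F) (M : ℕ) (Q : MvPolynomial τ (Polynomial F)) (hQ : Q ∈ JI τ t₀ ^ M)
    (α : τ →₀ ℕ) : (Polynomial.X - Polynomial.C t₀) ^ (M - α.degree) ∣ coeff α Q := by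
  induction M generalizing Q α with
  | zero => simp
  | succ M ih =>
    rw [pow_succ', JI] at hQ
    refine Submodule.mul_induction_on hQ ?_ ?_
    · intro m hm n hn
      revert n
      refine Submodule.span_induction (p := fun m _ => ∀ n ∈ JI τ t₀ ^ M,
        (Polynomial.X - Polynomial.C t₀) ^ (M + 1 - α.degree) ∣ coeff α (m * n)) ?_ ?_ ?_ ?_ hm
      · rintro x (rfl | ⟨i, rfl⟩) n hn
        · rw [coeff_C_mul]
          have h1 := mul_dvd_mul_left (Polynomial.X - Polynomial.C t₀) (ih n hn α)
          rw [← pow_succ'] at h1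
          exact (pow_dvd_pow _ (by omega)).trans h1
        · classical
          rw [coeff_X_mul']
          split_ifs with hi
          · refine (pow_dvd_pow _ ?_).trans (ih n hn _)
            have : α = (α - Finsupp.single i 1) + Finsupp.single i 1 := by
              rw [tsub_add_cancel_of_le]
              rw [Finsupp.single_le_iff]
              have := Finsupp.mem_support_iff.1 hi
              omega
            have h2 := congrArg Finsupp.degree this
            rw [map_add, Finsupp.degree_single] at h2
            omega
          · simp
      · simp
      · intro x y _ _ hx hy n hn
        rw [add_mul, coeff_add]
        exact dvd_add (hx n hn) (hy n hn)
      · intro a x _ hx n hn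
        rw [smul_eq_mul, mul_comm a x, mul_assoc]
        exact hx _ (Ideal.mul_mem_left _ _ hn)
    · intro x y hx hy
      rw [coeff_add]
      exact dvd_add hx hy

lemma line_dvd [Fintype F] (M : F → ℕ) (c : Polynomial F) (s : ℕ)
    (h : ∀ t, (Polynomial.X - Polynomial.C t) ^ (M t - s) ∣ c)
    (hd : c.natDegree < ∑ t, (M t - s)) : c = 0 := by
  by_contra hc
  have h1 : ∏ t : F, (Polynomial.X - Polynomial.C t) ^ (M t - s) ∣ c := by
    refine Finset.prod_dvd_of_coprime ?_ (fun t _ => h t)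
    intro a _ b _ hab
    exact (Polynomial.isCoprime_X_sub_C_of_isUnit_sub (sub_ne_zero.2 hab).isUnit).pow
  have h2 := Polynomial.natDegree_le_of_dvd h1 hc
  rw [Polynomial.natDegree_prod_of_monic _ _
    (fun t _ => (Polynomial.monic_X_sub_C t).pow _)] at h2
  simp only [Polynomial.natDegree_pow, Polynomial.natDegree_X_sub_C, mul_one] at h2
  omega

/-- restriction to a coordinate line -/
noncomputable def th {n : ℕ} (a : Fin n → F) :
    MvPolynomial (Fin (n + 1)) F →ₐ[F] MvPolynomial (Fin n) (Polynomial F) :=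
  aeval (Fin.cons (C Polynomial.X) (fun i => X i + C (Polynomial.C (a i))))

lemma th_coeff {n : ℕ} (a : Fin n → F) (P : MvPolynomial (Fin (n + 1)) F) (α : Fin n →₀ ℕ)
    (k : ℕ) : (coeff α (th a P)).coeff k = coeff α (tr a ((finSuccEquiv F n P).coeff k)) := by
  obtain ⟨Q, rfl⟩ := (finSuccEquiv F n).symm.surjective P
  rw [AlgEquiv.apply_symm_apply]
  induction Q using Polynomial.induction_on' with
  | add p q hp hq => simp [hp, hq]
  | monomial j p =>
    have e1 : (finSuccEquiv F n).symm (Polynomial.monomial j p)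
        = rename Fin.succ p * X 0 ^ j := by
      rw [AlgEquiv.symm_apply_eq, map_mul, map_pow, finSuccEquiv_X_zero,
        ← Polynomial.C_mul_X_pow_eq_monomial]
      congr 1
      induction p using MvPolynomial.induction_on with
      | C c => simp [finSuccEquiv_apply]
      | add p q hp hq => simp [hp, hq]
      | mul_X p i hp => simp [hp, finSuccEquiv_X_succ]
    have e2 : th a (rename Fin.succ p) = MvPolynomial.map Polynomial.C (tr a p) := by
      clear e1
      induction p using MvPolynomial.induction_on with
      | C c => simp [th, tr]
      | add p q hp hq => simp [hp, hq]
      | mul_X p i hp => 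
        rw [map_mul, map_mul, hp]
        simp [th, tr]
    rw [e1, map_mul, e2, map_pow]
    have e3 : th a (X 0) = C Polynomial.X := by simp [th]
    rw [e3, ← map_pow, mul_comm, coeff_C_mul, coeff_map, mul_comm, Polynomial.coeff_C_mul_X_pow,
      Polynomial.coeff_monomial]
    by_cases h : j = k
    · simp [h]
    · simp [h, Ne.symm h]

lemma sz [Fintype F] (n r : ℕ) (P : MvPolynomial (Fin n) F)
    (hP : P.totalDegree < r * Fintype.card F) (h : ∀ b, Mult b r P) : P = 0 := by
  induction n generalizing r with
  | zero =>
    have hr : 0 < r := by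
      rcases Nat.eq_zero_or_pos r with rfl | h
      · simp at hP
      · exact h
    have := h 0 0 (by simpa using hr)
    obtain ⟨c, rfl⟩ := C_surjective (Fin 0) P
    simpa [tr] using this
  | succ n ih =>
    set Q := finSuccEquiv F n P with hQ
    by_contra hne
    have hQ0 : Q ≠ 0 := by simpa [hQ] using hne
    set t := Q.natDegree with ht
    have hlc : Q.coeff t ≠ 0 := by simpa [ht] using hQ0
    have hdeg := totalDegree_coeff_finSuccEquiv_add_le P t hlc
    have hq : 0 < Fintype.card F := Fintype.card_pos
    apply hlc
    refine ih (r - t / Fintype.card F) _ ?_ ?_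
    · rw [Nat.sub_mul]
      have := Nat.div_mul_le_self t (Fintype.card F)
      change totalDegree (Q.coeff t) + t ≤ _ at hdeg
      omega
    · intro a α hα
      rw [← th_coeff]
      have : coeff α (th a P) = 0 := by
        refine line_dvd (fun _ => r) _ α.degree ?_ ?_
        · intro t₀
          refine JI_pow t₀ r _ ?_ α
          refine (h (Fin.cons t₀ a)).map (th a) (JI _ t₀) ?_
          intro i
          refine Fin.cases ?_ ?_ i
          · refine Ideal.subset_span (Or.inl ?_)
            simp [th, MvPolynomial.algebraMap_apply]
          · intro j
            refine Ideal.subset_span (Or.inr ⟨j, ?_⟩)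
            simp [th, MvPolynomial.algebraMap_apply]
        · have h1 : (coeff α (th a P)).natDegree ≤ t := by
            rw [Polynomial.natDegree_le_iff_coeff_eq_zero]
            intro k hk
            rw [th_coeff, Polynomial.coeff_eq_zero_of_natDegree_lt hk]
            simp
          simp only [Finset.sum_const, Finset.card_univ, smul_eq_mul]
          have h2 : t / Fintype.card F < r - α.degree := by omega
          rw [Nat.div_lt_iff_lt_mul hq] at h2
          rw [mul_comm]
          omega
      rw [this]; simp

/-- restriction to a line -/
noncomputable def ph (a u : σ → F) :
    MvPolynomial σ F →ₐ[F] MvPolynomial σ (Polynomial F) :=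
  aeval (fun i => X i + C (Polynomial.C (a i) + Polynomial.C (u i) * Polynomial.X))

lemma exists_sub_single (α : σ →₀ ℕ) (i : σ) (hi : i ∈ α.support) :
    (α - Finsupp.single i 1).degree + 1 = α.degree := by
  have : α = (α - Finsupp.single i 1) + Finsupp.single i 1 := by
    rw [tsub_add_cancel_of_le]
    rw [Finsupp.single_le_iff]
    have := Finsupp.mem_support_iff.1 hi
    omega
  have h2 := congrArg Finsupp.degree this
  rw [map_add, Finsupp.degree_single] at h2
  omega

lemma ph_monomial (a u : σ → F) (k : ℕ) (β : σ →₀ ℕ) (hβ : β.degree = k) :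
    (∀ α : σ →₀ ℕ, k < α.degree → coeff α (tr u (monomial β 1)) = 0) ∧
    ∀ (l : ℕ) (α : σ →₀ ℕ), k ≤ l + α.degree →
      (coeff α (ph a u (monomial β 1))).coeff l =
        if l + α.degree = k then coeff α (tr u (monomial β 1)) else 0 := by
  classical
  induction k generalizing β with
  | zero =>
    have : β = 0 := (Finsupp.degree_eq_zero_iff β).1 hβ
    subst this
    have e : (monomial 0 1 : MvPolynomial σ F) = 1 := rfl
    rw [e, map_one, map_one]
    constructor
    · intro α hα
      rw [coeff_one, if_neg]
      rintro rfl
      simp at hα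
    · intro l α _
      rw [coeff_one, coeff_one]
      by_cases h : 0 = α
      · subst h
        simp [Polynomial.coeff_one]
      · simp [h]
  | succ k ih =>
    have hne : β.support.Nonempty := by
      rw [Finsupp.support_nonempty_iff]
      rintro rfl
      simp at hβ
    obtain ⟨i, hi⟩ := hne
    have hd := exists_sub_single β i hi
    obtain ⟨ih1, ih2⟩ := ih (β - Finsupp.single i 1) (by omega)
    have e : (monomial β 1 : MvPolynomial σ F) = X i * monomial (β - Finsupp.single i 1) 1 := by
      rw [X, monomial_mul, add_comm, tsub_add_cancel_of_le]
      · simp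
      · rw [Finsupp.single_le_iff]
        have := Finsupp.mem_support_iff.1 hi
        omega
    rw [e, map_mul, map_mul]
    set R := tr u (monomial (β - Finsupp.single i 1) 1) with hR
    set Q := ph a u (monomial (β - Finsupp.single i 1) 1) with hQ
    have e1 : tr u (X i) = X i + C (u i) := by simp [tr]
    have e2 : ph a u (X i) = X i + C (Polynomial.C (a i) + Polynomial.C (u i) * Polynomial.X) := by
      simp [ph]
    rw [e1, e2]
    simp only [add_mul, coeff_add, coeff_C_mul, coeff_X_mul']
    constructor
    · intro α hα
      rw [ih1 α (by omega)]
      split_ifs with h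
      · have := exists_sub_single α i h
        rw [ih1 _ (by omega)]; simp
      · simp
    · intro l α hl
      rw [Polynomial.coeff_add, Polynomial.coeff_add, mul_assoc, Polynomial.coeff_C_mul,
        Polynomial.coeff_C_mul, ih2 l α (by omega), if_neg (show l + α.degree ≠ k by omega)]
      have A : (if i ∈ α.support then coeff (α - Finsupp.single i 1) Q else 0).coeff l =
          if l + α.degree = k + 1 then 
            (if i ∈ α.support then coeff (α - Finsupp.single i 1) R else 0) else 0 := by
        by_cases h : i ∈ α.support
        · have := exists_sub_single α i h
          rw [if_pos h, if_pos h, ih2 _ _ (by omega)]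
          congr 1
          simp only [eq_iff_iff]
          omega
        · simp [h]
      have B : (Polynomial.X * coeff α Q).coeff l =
          if l + α.degree = k + 1 then coeff α R else 0 := by
        cases l with
        | zero => 
          rw [Polynomial.coeff_X_mul_zero, ih1 α (by omega)]
          simp
        | succ l =>
          rw [Polynomial.coeff_X_mul, ih2 _ _ (by omega)]
          congr 1
          simp only [eq_iff_iff]
          omega
      rw [A, B]
      split_ifs <;> simp

lemma ph_low (a u : σ → F) (k : ℕ) (P : MvPolynomial σ F)
    (hP : ∀ β : σ →₀ ℕ, k ≤ β.degree → coeff β P = 0) (l : ℕ) (α : σ →₀ ℕ)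
    (h : k ≤ l + α.degree) : (coeff α (ph a u P)).coeff l = 0 := by
  rw [P.as_sum, map_sum, coeff_sum, Polynomial.finsetSum_coeff]
  refine Finset.sum_eq_zero fun β hβ => ?_
  have hk : β.degree < k := by
    by_contra hc
    exact (mem_support_iff.1 hβ) (hP β (by omega))
  have e : (monomial β (coeff β P) : MvPolynomial σ F) = coeff β P • monomial β 1 := by
    simp [smul_monomial]
  rw [e, map_smul, coeff_smul, Polynomial.coeff_smul,
    (ph_monomial a u _ β rfl).2 l α (by omega), if_neg (by omega), smul_zero]

lemma ph_hom (a u : σ → F) (k : ℕ) (P : MvPolynomial σ F) (hP : P.IsHomogeneous k)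
    (l : ℕ) (α : σ →₀ ℕ)
    (h : l + α.degree = k) : (coeff α (ph a u P)).coeff l = coeff α (tr u P) := by
  conv_lhs => rw [P.as_sum]
  conv_rhs => rw [P.as_sum]
  rw [map_sum, coeff_sum, Polynomial.finsetSum_coeff, map_sum, coeff_sum]
  refine Finset.sum_congr rfl fun β hβ => ?_
  have hk : β.degree = k := by
    by_contra hc
    exact (mem_support_iff.1 hβ) (hP.coeff_eq_zero hc)
  have e : (monomial β (coeff β P) : MvPolynomial σ F) = coeff β P • monomial β 1 := by
    simp [smul_monomial]
  rw [e, map_smul, map_smul, coeff_smul, coeff_smul, Polynomial.coeff_smul,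
    (ph_monomial a u _ β rfl).2 l α (by omega), if_pos (by omega)]

lemma tr_high (u : σ → F) (k : ℕ) (P : MvPolynomial σ F) (hP : P.IsHomogeneous k)
    (α : σ →₀ ℕ) (h : k < α.degree) : coeff α (tr u P) = 0 := by
  rw [P.as_sum, map_sum, coeff_sum]
  refine Finset.sum_eq_zero fun β hβ => ?_
  have hk : β.degree = k := by
    by_contra hc
    exact (mem_support_iff.1 hβ) (hP.coeff_eq_zero hc)
  have e : (monomial β (coeff β P) : MvPolynomial σ F) = coeff β P • monomial β 1 := by
    simp [smul_monomial]
  rw [e, map_smul, coeff_smul, (ph_monomial u u _ β rfl).1 α (by omega), smul_zero]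

lemma arith (q D s r T S : ℕ) (h1 : s < r) (h2 : s ≤ D) (h3 : D < r * (q + 1))
    (h4 : (2 * q + 1) * r ≤ T) (h5 : T ≤ S + (q + 1) * s) : D - s < S := by
  have := Nat.mul_le_mul_left q h1.le
  have h6 : D < S + s := by nlinarith
  omega

/-- the line argument -/
lemma line_arg [Fintype F] (g : (σ → F) → ℕ) (D r : ℕ) (h p : MvPolynomial σ F)
    (hh : h.IsHomogeneous D) (hp : ∀ β : σ →₀ ℕ, D ≤ β.degree → coeff β p = 0)
    (hv : ∀ x, Mult x (g x) (h - p)) (hD : D < r * Fintype.card F) (a u : σ → F)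
    (hg : (2 * Fintype.card F - 1) * r ≤ ∑ t : F, g (a + t • u)) : Mult u r h := by
  intro α hα
  by_cases hs : D < α.degree
  · exact tr_high u D h hh α hs
  push Not at hs
  have hq : 0 < Fintype.card F := Fintype.card_pos
  have h0 : coeff α (ph a u (h - p)) = 0 := by
    refine line_dvd (fun t => g (a + t • u)) _ α.degree ?_ ?_
    · intro t
      refine JI_pow t _ _ ?_ α
      refine (hv (a + t • u)).map (ph a u) (JI _ t) ?_
      intro i
      have e : ph a u (X i) - algebraMap F _ ((a + t • u) i) =
          X i + C (Polynomial.C (u i)) * C (Polynomial.X - Polynomial.C t) := by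
        simp [ph, MvPolynomial.algebraMap_apply]
        ring
      rw [e]
      refine Ideal.add_mem _ (Ideal.subset_span (Or.inr ⟨i, rfl⟩)) 
        (Ideal.mul_mem_left _ _ (Ideal.subset_span (Or.inl rfl)))
    · have h1 : (coeff α (ph a u (h - p))).natDegree ≤ D - α.degree := by
        rw [Polynomial.natDegree_le_iff_coeff_eq_zero]
        intro k hk
        refine ph_low a u (D + 1) _ ?_ k α (by omega)
        intro β hβ
        rw [coeff_sub, hp β (by omega), hh.coeff_eq_zero (by omega), sub_zero]
      have h2 : ∑ t : F, g (a + t • u) ≤ ∑ t : F, (g (a + t • u) - α.degree) 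
          + Fintype.card F * α.degree := by
        have : Fintype.card F * α.degree = ∑ t : F, α.degree := by simp
        rw [this, ← Finset.sum_add_distrib]
        exact Finset.sum_le_sum fun t _ => by omega
      refine lt_of_le_of_lt h1 ?_
      obtain ⟨q, hq'⟩ : ∃ q, Fintype.card F = q + 1 := ⟨Fintype.card F - 1, by omega⟩
      rw [hq'] at hg h2 hD
      have e3 : 2 * (q + 1) - 1 = 2 * q + 1 := by omega
      rw [e3] at hg
      exact arith _ _ _ _ _ _ hα hs hD hg h2
  have h1 := ph_hom a u D h hh (D - α.degree) α (by omega)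
  rw [← h1]
  have h2 := congrArg (fun c => Polynomial.coeff c (D - α.degree)) h0
  simp only [map_sub, coeff_sub, Polynomial.coeff_sub, Polynomial.coeff_zero] at h2
  rw [ph_low a u D p hp _ _ (by omega), sub_zero] at h2
  exact h2

section LA
variable {F : Type*} [Field F] {M Y ι : Type*} [AddCommGroup M] [Module F M]
  [AddCommGroup Y] [Module F Y]
open Module

lemma rn (E : M →ₗ[F] Y) (A : Submodule F M) [FiniteDimensional F A] :
    finrank F (A.map E) + finrank F (A ⊓ LinearMap.ker E : Submodule F M) = finrank F A := by
  have h := LinearMap.finrank_range_add_finrank_ker (E.domRestrict A)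
  rw [LinearMap.range_domRestrict, LinearMap.ker_domRestrict] at h
  rw [← h, ← Submodule.map_comap_subtype, Submodule.finrank_map_subtype_eq]

lemma rstep (E : M →ₗ[F] Y) (A : Submodule F M) [FiniteDimensional F A] [FiniteDimensional F Y]
    (V : Submodule F Y) : finrank F V + finrank F A ≤
      finrank F (V ⊔ A.map E : Submodule F Y) + finrank F (A ⊓ V.comap E : Submodule F M) := by
  have h1 := Submodule.finrank_sup_add_finrank_inf_eq V (A.map E)
  have h2 := rn E A
  have : FiniteDimensional F (A ⊓ V.comap E : Submodule F M) :=
    Submodule.finiteDimensional_of_le (inf_le_left : A ⊓ V.comap E ≤ A)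
  have h3 := rn E (A ⊓ V.comap E)
  have h4 : (A ⊓ V.comap E) ⊓ LinearMap.ker E = A ⊓ LinearMap.ker E := by
    rw [inf_assoc, inf_eq_right.2 (show LinearMap.ker E ≤ V.comap E from ?_)]
    intro x hx
    simp only [Submodule.mem_comap]
    rw [LinearMap.mem_ker.1 hx]
    exact V.zero_mem
  have h5 : (A ⊓ V.comap E).map E = V ⊓ A.map E := by
    ext y
    constructor
    · rintro ⟨x, ⟨hx, hx'⟩, rfl⟩
      exact ⟨hx', x, hx, rfl⟩
    · rintro ⟨hy, x, hx, rfl⟩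
      exact ⟨x, ⟨hx, hy⟩, rfl⟩
  rw [h4, h5] at h3
  omega

lemma polym [DecidableEq ι] (A : Submodule F M) [FiniteDimensional F A] (B : ι → Submodule F M)
    (U : Finset ι) : ∃ δ : ι → ℕ,
      ∑ u ∈ U, δ u + finrank F (A ⊓ U.inf B : Submodule F M) = finrank F A ∧
      ∀ T ⊆ U, ∑ u ∈ T, δ u + finrank F (A ⊓ T.inf B : Submodule F M) ≤ finrank F A := by
  have fd : ∀ X : Submodule F M, FiniteDimensional F (A ⊓ X : Submodule F M) := fun X =>
    Submodule.finiteDimensional_of_le (inf_le_left : A ⊓ X ≤ A)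
  induction U using Finset.induction_on with
  | empty =>
    refine ⟨fun _ => 0, by rw [Finset.inf_empty, inf_top_eq]; simp, ?_⟩
    intro T hT
    rw [Finset.subset_empty.1 hT, Finset.inf_empty, inf_top_eq]
    simp
  | insert a U ha ih =>
    obtain ⟨δ, h1, h2⟩ := ih
    have hle : finrank F (A ⊓ (insert a U).inf B : Submodule F M) ≤
        finrank F (A ⊓ U.inf B : Submodule F M) := by
      have := fd (U.inf B)
      apply Submodule.finrank_mono
      exact inf_le_inf_left _ (Finset.inf_mono (Finset.subset_insert a U))
    set δ' : ι → ℕ := fun u => if u = a then finrank F (A ⊓ U.inf B : Submodule F M) -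
      finrank F (A ⊓ (insert a U).inf B : Submodule F M) else δ u with hδ'
    have hs : ∀ T : Finset ι, a ∉ T → ∑ u ∈ T, δ' u = ∑ u ∈ T, δ u := by
      intro T hT
      refine Finset.sum_congr rfl fun u hu => ?_
      rw [hδ']
      simp only
      rw [if_neg]
      rintro rfl
      exact hT hu
    have ha' : δ' a = finrank F (A ⊓ U.inf B : Submodule F M) -
      finrank F (A ⊓ (insert a U).inf B : Submodule F M) := by simp [hδ']
    refine ⟨δ', ?_, ?_⟩
    · rw [Finset.sum_insert ha, hs U ha, ha']
      omega
    · intro T hT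
      by_cases haT : a ∈ T
      · obtain ⟨T₀, haT₀, rfl⟩ : ∃ T₀, a ∉ T₀ ∧ T = insert a T₀ :=
          ⟨T.erase a, Finset.notMem_erase a T, (Finset.insert_erase haT).symm⟩
        have hT₀ : T₀ ⊆ U := by
          intro x hx
          have := hT (Finset.mem_insert_of_mem hx)
          rcases Finset.mem_insert.1 this with rfl | h
          · exact absurd hx haT₀
          · exact h
        rw [Finset.sum_insert haT₀, hs T₀ haT₀, ha']
        have h3 := h2 T₀ hT₀
        have := fd (U.inf B)
        have := fd (T₀.inf B)
        have := fd ((insert a T₀).inf B)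
        have h4 := Submodule.finrank_sup_add_finrank_inf_eq (A ⊓ U.inf B) (A ⊓ (insert a T₀).inf B)
        have h5 : (A ⊓ U.inf B) ⊓ (A ⊓ (insert a T₀).inf B) = A ⊓ (insert a U).inf B := by
          rw [← inf_inf_distrib_left, ← Finset.inf_union]
          congr 2
          ext x
          simp only [Finset.mem_union, Finset.mem_insert]
          constructor
          · rintro (h | h | h)
            · exact Or.inr h
            · exact Or.inl h
            · exact Or.inr (hT₀ h)
          · rintro (h | h)
            · exact Or.inr (Or.inl h)
            · exact Or.inl h
        have h6 : (A ⊓ U.inf B) ⊔ (A ⊓ (insert a T₀).inf B) ≤ A ⊓ T₀.inf B :=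
          sup_le (inf_le_inf_left _ (Finset.inf_mono hT₀))
            (inf_le_inf_left _ (Finset.inf_mono (Finset.subset_insert a T₀)))
        have h7 := Submodule.finrank_mono h6
        rw [h5] at h4
        omega
      · rw [hs T haT]
        apply h2
        intro x hx
        rcases Finset.mem_insert.1 (hT hx) with rfl | h
        · exact absurd hx haT
        · exact h

lemma trans_gl (u v : M) (hu : u ≠ 0) (hv : v ≠ 0) : 
    ∃ g : M ≃ₗ[F] M, g u = v := by
  let f := (LinearEquiv.toSpanNonzeroSingleton F M u hu).symm ≪≫ₗ
    LinearEquiv.toSpanNonzeroSingleton F M v hv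
  obtain ⟨g, hg⟩ := Submodule.exists_linearEquiv_restrict_eq f
  refine ⟨g, ?_⟩
  have h1 := hg (LinearEquiv.toSpanNonzeroSingleton F M u hu 1)
  simp only [f, LinearEquiv.trans_apply, LinearEquiv.symm_apply_apply] at h1
  simpa using h1.symm

end LA

section avg
open Module
variable {F : Type*} [Field F] {n : ℕ}

/-- linear substitution -/
noncomputable def sb (g : (Fin n → F) →ₗ[F] (Fin n → F)) :
    MvPolynomial (Fin n) F →ₐ[F] MvPolynomial (Fin n) F :=
  aeval (fun i => ∑ j, C (g (fun k => if j = k then 1 else 0) i) * X j)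

lemma sb_X (g : (Fin n → F) →ₗ[F] (Fin n → F)) (i : Fin n) :
    sb g (X i) = ∑ j, C (g (fun k => if j = k then 1 else 0) i) * X j := by simp [sb]

lemma sb_sb (g g' : (Fin n → F) →ₗ[F] (Fin n → F)) (P : MvPolynomial (Fin n) F) :
    sb g (sb g' P) = sb (g' ∘ₗ g) P := by
  have : (sb g).comp (sb g') = sb (g' ∘ₗ g) := by
    apply MvPolynomial.algHom_ext
    intro i
    rw [AlgHom.comp_apply, sb_X, map_sum, sb_X]
    simp only [map_mul, sb_X, LinearMap.comp_apply]
    have e : ∀ c, sb g (C c) = C c := fun c => by simp [sb]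
    simp only [e, Finset.mul_sum]
    rw [Finset.sum_comm]
    refine Finset.sum_congr rfl fun k _ => ?_
    conv_rhs => rw [LinearMap.pi_apply_eq_sum_univ g' (g _)]
    rw [Finset.sum_apply, map_sum, Finset.sum_mul]
    refine Finset.sum_congr rfl fun j _ => ?_
    simp only [Pi.smul_apply, smul_eq_mul, map_mul]
    ring
  exact congrArg (fun f => f P) this

lemma sb_inj (g : (Fin n → F) ≃ₗ[F] (Fin n → F)) :
    Function.Injective (sb (g : (Fin n → F) →ₗ[F] (Fin n → F))) := by
  apply Function.LeftInverse.injective (g := sb (g.symm : (Fin n → F) →ₗ[F] (Fin n → F)))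
  intro P
  rw [sb_sb]
  have : (g : (Fin n → F) →ₗ[F] (Fin n → F)) ∘ₗ (g.symm : (Fin n → F) →ₗ[F] (Fin n → F)) = 
    LinearMap.id := by ext; simp
  rw [this]
  have : sb (LinearMap.id : (Fin n → F) →ₗ[F] (Fin n → F)) = AlgHom.id F _ := by
    apply MvPolynomial.algHom_ext
    intro i
    rw [sb_X]
    simp 
  rw [this]; rfl

lemma sb_hom (g : (Fin n → F) →ₗ[F] (Fin n → F)) (P : MvPolynomial (Fin n) F) (D : ℕ)
    (hP : P.IsHomogeneous D) : (sb g P).IsHomogeneous D := by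
  have := hP.aeval (n := 1) (fun i => ∑ j, C (g (fun k => if j = k then 1 else 0) i) * X j)
    (fun i => IsHomogeneous.sum _ _ _ fun j _ => isHomogeneous_C_mul_X _ _)
  rw [one_mul] at this
  exact this

lemma sb_mult (g : (Fin n → F) →ₗ[F] (Fin n → F)) (P : MvPolynomial (Fin n) F) (r : ℕ)
    (u : Fin n → F) (hP : Mult (g u) r P) : Mult u r (sb g P) := by
  rw [mult_iff]
  refine hP.map ((tr u).comp (sb g)) _ ?_
  intro i
  have e : ((tr u).comp (sb g)) (X i) - algebraMap F _ (g u i) =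
      ∑ j, C (g (fun k => if j = k then 1 else 0) i) * X j := by
    rw [LinearMap.pi_apply_eq_sum_univ g u, AlgHom.comp_apply, sb_X, map_sum, Finset.sum_apply,
      map_sum, ← Finset.sum_sub_distrib]
    refine Finset.sum_congr rfl fun j _ => ?_
    simp [tr, MvPolynomial.algebraMap_eq]
    ring
  rw [e]
  exact Ideal.sum_mem _ fun j _ => Ideal.mul_mem_left _ _ (Ideal.subset_span ⟨j, rfl⟩)

/-- polynomials vanishing to order `r` at `u` -/
def Bs (r : ℕ) (u : Fin n → F) : Submodule F (MvPolynomial (Fin n) F) where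
  carrier := {P | Mult u r P}
  add_mem' := by
    intro a b ha hb α hα
    rw [map_add, coeff_add, ha α hα, hb α hα, add_zero]
  zero_mem' := by
    intro α hα
    simp
  smul_mem' := by
    intro c a ha α hα
    rw [map_smul, coeff_smul, ha α hα, smul_zero]

lemma mem_K (D r : ℕ) (T : Finset (Fin n → F)) (P : MvPolynomial (Fin n) F) :
    P ∈ homogeneousSubmodule (Fin n) F D ⊓ T.inf (Bs r) ↔
      P.IsHomogeneous D ∧ ∀ u ∈ T, Mult u r P := by
  rw [Submodule.mem_inf, Submodule.mem_finsetInf]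
  rfl

instance fdA (D : ℕ) : FiniteDimensional F (homogeneousSubmodule (Fin n) F D) :=
  Module.Finite.iff_fg.2 (homogeneousSubmodule_fg _ _ _)

lemma K_all [Fintype F] [DecidableEq F] (hn : 1 ≤ n) (D r : ℕ) (hD : D < r * Fintype.card F) :
    homogeneousSubmodule (Fin n) F D ⊓ 
      ((Finset.univ : Finset (Fin n → F)).filter (· ≠ 0)).inf (Bs r) = ⊥ := by
  rw [eq_bot_iff]
  intro P hP
  rw [mem_K] at hP
  obtain ⟨h1, h2⟩ := hP
  rw [Submodule.mem_bot]
  simp only [Finset.mem_filter, Finset.mem_univ, true_and] at h2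
  by_cases hr : D < r
  · have h3 := h2 (fun _ => 1) (fun h => one_ne_zero (congrFun h ⟨0, hn⟩))
    have h4 : tr (fun _ => (1 : F)) P = 0 := by
      ext α
      rw [coeff_zero]
      by_cases hα : α.degree < r
      · exact h3 α hα
      · exact tr_high _ D P h1 α (by omega)
    have h5 : tr (fun _ => (-1 : F)) (tr (fun _ => (1 : F)) P) = P := by
      have : (tr (fun _ : Fin n => (-1 : F))).comp (tr (fun _ => (1 : F))) = AlgHom.id F _ := by
        apply MvPolynomial.algHom_ext
        intro i
        simp [tr]
      exact congrArg (fun f => f P) this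
    rw [← h5, h4, map_zero]
  · refine sz n r P (lt_of_le_of_lt h1.totalDegree_le hD) ?_
    intro b
    by_cases hb : b = 0
    · subst hb
      intro α hα
      have : tr (0 : Fin n → F) P = P := by
        have : tr (0 : Fin n → F) = AlgHom.id F _ := by
          apply MvPolynomial.algHom_ext
          intro i
          simp [tr]
        rw [this]; rfl
      rw [this]
      exact h1.coeff_eq_zero (by omega)
    · exact h2 b hb

lemma avg [Fintype F] [DecidableEq F] (hn : 1 ≤ n) (D r : ℕ) (hD : D < r * Fintype.card F)
    (T : Finset (Fin n → F)) (hT : ∀ u ∈ T, u ≠ 0) :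
    T.card * finrank F (homogeneousSubmodule (Fin n) F D) +
      ((Finset.univ : Finset (Fin n → F)).filter (· ≠ 0)).card *
        finrank F (homogeneousSubmodule (Fin n) F D ⊓ T.inf (Bs r) : Submodule F _) ≤ 
      ((Finset.univ : Finset (Fin n → F)).filter (· ≠ 0)).card *
        finrank F (homogeneousSubmodule (Fin n) F D) := by
  classical
  set U := ((Finset.univ : Finset (Fin n → F)).filter (· ≠ 0)) with hU
  set A := homogeneousSubmodule (Fin n) F D with hA
  obtain ⟨δ, h1, h2⟩ := polym A (Bs r) U
  rw [K_all hn D r hD, finrank_bot, add_zero] at h1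
  set k := finrank F (A ⊓ T.inf (Bs r) : Submodule F _) with hk
  let G := (Fin n → F) ≃ₗ[F] (Fin n → F)
  have : Finite G := DFunLike.finite _
  have : Fintype G := Fintype.ofFinite G
  have h3 : ∀ g : G, ∑ u ∈ T, δ (g u) + k ≤ finrank F A := by
    intro g
    have h4 := h2 (T.image g) (by
      intro x hx
      obtain ⟨u, hu, rfl⟩ := Finset.mem_image.1 hx
      simp [hU, hT u hu])
    rw [Finset.sum_image (fun x _ y _ h => g.injective h)] at h4
    have h5 : k ≤ finrank F (A ⊓ (T.image g).inf (Bs r) : Submodule F _) := by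
      have e := LinearEquiv.finrank_eq (Submodule.equivMapOfInjective
        (sb (g.symm : (Fin n → F) →ₗ[F] (Fin n → F))).toLinearMap (sb_inj g.symm)
        (A ⊓ T.inf (Bs r)))
      rw [hk, e]
      have : FiniteDimensional F (A ⊓ (T.image g).inf (Bs r) : Submodule F _) :=
        Submodule.finiteDimensional_of_le (inf_le_left : A ⊓ _ ≤ A)
      apply Submodule.finrank_mono
      rintro _ ⟨P, hP, rfl⟩
      have hP' := (mem_K _ _ _ _).1 hP
      refine (mem_K _ _ _ _).2 ⟨sb_hom _ _ _ hP'.1, ?_⟩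
      intro x hx
      obtain ⟨u, hu, rfl⟩ := Finset.mem_image.1 hx
      apply sb_mult
      have e2 : (g.symm : (Fin n → F) →ₗ[F] (Fin n → F)) (g u) = u :=
        LinearEquiv.symm_apply_apply g u
      rw [e2]
      exact hP'.2 u hu
    omega
  have h4 : ∑ u ∈ T, ∑ g : G, δ (g u) + Fintype.card G * k ≤ Fintype.card G * finrank F A := by
    rw [Finset.sum_comm]
    have := Finset.sum_le_sum (fun g (_ : g ∈ (Finset.univ : Finset G)) => h3 g)
    rw [Finset.sum_add_distrib] at this
    simpa using this
  obtain ⟨u₀, hu₀⟩ : ∃ u₀ : Fin n → F, u₀ ≠ 0 :=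
    ⟨fun _ => 1, (fun h => one_ne_zero (congrFun h ⟨0, hn⟩))⟩
  set Δ := ∑ g : G, δ (g u₀) with hΔ
  have h5 : ∀ u : Fin n → F, u ≠ 0 → ∑ g : G, δ (g u) = Δ := by
    intro u hu
    obtain ⟨g₀, hg₀⟩ := trans_gl (F := F) u₀ u hu₀ hu
    rw [← hg₀]
    exact Fintype.sum_equiv (Equiv.mulRight g₀) _ _ (fun g => rfl)
  have h6 : ∑ u ∈ T, ∑ g : G, δ (g u) = T.card * Δ := by
    rw [Finset.sum_congr rfl fun u hu => h5 u (hT u hu)]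
    simp
  have h7 : ∑ u ∈ U, ∑ g : G, δ (g u) = U.card * Δ := by
    rw [Finset.sum_congr rfl fun u hu => h5 u (by simpa [hU] using hu)]
    simp
  have h8 : ∑ u ∈ U, ∑ g : G, δ (g u) = Fintype.card G * finrank F A := by
    rw [Finset.sum_comm, ← h1]
    have : ∀ g : G, ∑ u ∈ U, δ (g u) = ∑ u ∈ U, δ u := by
      intro g
      refine Finset.sum_equiv g.toEquiv ?_ ?_
      · intro i; simp [hU]
      · intro i _; rfl
    simp [this]
  rw [h6] at h4
  rw [h7] at h8
  have hG : 0 < Fintype.card G := Fintype.card_pos_iff.2 ⟨LinearEquiv.refl _ _⟩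
  refine Nat.le_of_mul_le_mul_left ?_ hG
  calc Fintype.card G * (T.card * finrank F A + U.card * k)
      = T.card * (Fintype.card G * finrank F A) + U.card * (Fintype.card G * k) := by ring
    _ = U.card * (T.card * Δ + Fintype.card G * k) := by rw [← h8]; ring
    _ ≤ U.card * (Fintype.card G * finrank F A) := Nat.mul_le_mul_left _ h4
    _ = _ := by ring

lemma finrank_A (hn : 1 ≤ n) (D : ℕ) :
    (D + n - 1).choose (n - 1) ≤ finrank F (homogeneousSubmodule (Fin n) F D) := by
  classical
  have hc := Finset.card_finsuppAntidiag_nat_eq_choose (s := (Finset.univ : Finset (Fin n))) D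
  have hs : (D + n - 1).choose (n - 1) = (n + D - 1).choose D := by
    rw [add_comm D n]
    exact Nat.choose_symm_of_eq_add (by omega)
  rw [Finset.card_univ, Fintype.card_fin] at hc
  rw [hs, ← hc]
  have hmem : ∀ β : ((Finset.univ : Finset (Fin n)).finsuppAntidiag D), 
      (monomial (β : Fin n →₀ ℕ) (1 : F)) ∈ homogeneousSubmodule (Fin n) F D := by
    rintro ⟨β, hβ⟩
    apply isHomogeneous_monomial
    rw [Finset.mem_finsuppAntidiag] at hβ
    rw [Finsupp.degree_eq_sum]
    exact hβ.1
  have li : LinearIndependent F (fun β : ((Finset.univ : Finset (Fin n)).finsuppAntidiag D) =>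
      (⟨_, hmem β⟩ : homogeneousSubmodule (Fin n) F D)) := by
    apply LinearIndependent.of_comp (homogeneousSubmodule (Fin n) F D).subtype
    have := (basisMonomials (Fin n) F).linearIndependent
    rw [coe_basisMonomials] at this
    exact this.comp (fun β : ((Finset.univ : Finset (Fin n)).finsuppAntidiag D) => 
      (β : Fin n →₀ ℕ)) Subtype.val_injective
  simpa using li.fintype_card_le_finrank

end avg
section fin
open Module
variable {F : Type*} [Field F] {n : ℕ}

/-- polynomials of degree less than `D` -/
def low (D : ℕ) : Submodule F (MvPolynomial (Fin n) F) where
  carrier := {P | ∀ β : Fin n →₀ ℕ, D ≤ β.degree → coeff β P = 0}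
  add_mem' := by
    intro a b ha hb β hβ
    rw [coeff_add, ha β hβ, hb β hβ, add_zero]
  zero_mem' := by
    intro β hβ
    simp
  smul_mem' := by
    intro c a ha β hβ
    rw [coeff_smul, ha β hβ, smul_zero]

/-- multi-indices of degree less than `M` -/
def Sx (n M : ℕ) : Finset (Fin n →₀ ℕ) :=
  (Finset.range M).biUnion fun j => (Finset.univ : Finset (Fin n)).finsuppAntidiag j

lemma mem_Sx (M : ℕ) (α : Fin n →₀ ℕ) : α ∈ Sx n M ↔ α.degree < M := by
  simp [Sx, Finsupp.degree_eq_sum, Finset.mem_finsuppAntidiag]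

lemma card_Sx (hn : 1 ≤ n) (M : ℕ) : (Sx n M).card ≤ (M + n - 1).choose n := by
  refine Finset.card_biUnion_le.trans ?_
  obtain ⟨k, rfl⟩ : ∃ k, n = k + 1 := ⟨n - 1, by omega⟩
  cases M with
  | zero => simp
  | succ M =>
    have h := Nat.sum_range_add_choose M k
    have e : M + 1 + (k + 1) - 1 = M + k + 1 := by omega
    rw [e, ← h]
    refine Finset.sum_le_sum fun j _ => ?_
    rw [Finset.card_finsuppAntidiag_nat_eq_choose, Finset.card_univ, Fintype.card_fin]
    apply le_of_eq
    rw [show k + 1 + j - 1 = j + k by omega]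
    exact Nat.choose_symm_add

/-- the constraint map -/
noncomputable def Ev (g : (Fin n → F) → ℕ) :
    MvPolynomial (Fin n) F →ₗ[F] ((x : Fin n → F) → (Sx n (g x) → F)) :=
  LinearMap.pi fun x => LinearMap.pi fun α => (lcoeff F (α : Fin n →₀ ℕ)) ∘ₗ (tr x).toLinearMap

lemma Ev_ker (g : (Fin n → F) → ℕ) (P : MvPolynomial (Fin n) F) (h : Ev g P = 0) (x : Fin n → F) :
    Mult x (g x) P := by
  intro α hα
  exact congrFun (congrFun h x) ⟨α, (mem_Sx _ _).2 hα⟩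

variable [Fintype F] [DecidableEq F]

lemma finrank_Y (hn : 1 ≤ n) (g : (Fin n → F) → ℕ) :
    finrank F ((x : Fin n → F) → (Sx n (g x) → F)) ≤ ∑ x, (g x + n - 1).choose n := by
  rw [Module.finrank_pi_fintype]
  refine Finset.sum_le_sum fun x _ => ?_
  rw [Module.finrank_fintype_fun_eq_card, Fintype.card_coe]
  exact card_Sx hn _

lemma stepV (hn : 1 ≤ n) (g : (Fin n → F) → ℕ) (D r : ℕ) (hD : D < r * Fintype.card F)
    (T : Finset (Fin n → F)) (hT : ∀ u ∈ T, u ≠ 0)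
    (hT' : ∀ u ∈ T, ∃ a, (2 * Fintype.card F - 1) * r ≤ ∑ t : F, g (a + t • u)) :
    ((Finset.univ : Finset (Fin n → F)).filter (· ≠ 0)).card * finrank F ((low D).map (Ev g)) +
      T.card * (D + n - 1).choose (n - 1) ≤
    ((Finset.univ : Finset (Fin n → F)).filter (· ≠ 0)).card *
      finrank F ((low (D + 1)).map (Ev g)) := by
  have h1 := rstep (Ev g) (homogeneousSubmodule (Fin n) F D) ((low D).map (Ev g))
  have h2 := avg hn D r hD T hT
  have h3 := finrank_A (F := F) hn D
  have h4 : finrank F (homogeneousSubmodule (Fin n) F D ⊓ ((low D).map (Ev g)).comap (Ev g) :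
      Submodule F _) ≤
      finrank F (homogeneousSubmodule (Fin n) F D ⊓ T.inf (Bs r) : Submodule F _) := by
    have : FiniteDimensional F (homogeneousSubmodule (Fin n) F D ⊓ T.inf (Bs r) : Submodule F _) :=
      Submodule.finiteDimensional_of_le
        (inf_le_left : homogeneousSubmodule (Fin n) F D ⊓ _ ≤ homogeneousSubmodule (Fin n) F D)
    apply Submodule.finrank_mono
    rintro h ⟨hh, p, hp, hpe⟩
    refine (mem_K _ _ _ _).2 ⟨hh, ?_⟩
    intro u hu
    obtain ⟨a, ha⟩ := hT' u hu
    refine line_arg g D r h p hh hp ?_ hD a u ha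
    refine Ev_ker g _ ?_
    rw [map_sub, hpe, sub_self]
  have h5 : finrank F ((low D).map (Ev g) ⊔ (homogeneousSubmodule (Fin n) F D).map (Ev g) :
      Submodule F _) ≤ finrank F ((low (D + 1)).map (Ev g)) := by
    apply Submodule.finrank_mono
    rw [← Submodule.map_sup]
    apply Submodule.map_mono
    apply sup_le
    · intro p hp β hβ
      exact hp β (by omega)
    · intro p hp β hβ
      exact IsHomogeneous.coeff_eq_zero hp (by omega)
  have h6 := Nat.mul_le_mul_left T.card h3
  have h7 := Nat.mul_le_mul_left ((Finset.univ : Finset (Fin n → F)).filter (· ≠ 0)).card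
    (h1.trans (add_le_add h5 h4))
  rw [mul_add, mul_add] at h7
  omega

lemma count (Pr : Finset (Fin n → F)) (hPr0 : ∀ u ∈ Pr, u ≠ 0)
    (hPr : ∀ u : Fin n → F, u ≠ 0 → ∃! v, v ∈ Pr ∧ ∃ c : Fˣ, u = (c : F) • v)
    (p : (Fin n → F) → Prop) [DecidablePred p] (hp : ∀ (c : Fˣ) u, p ((c : F) • u) ↔ p u) :
    ((Finset.univ : Finset (Fin n → F)).filter (fun u => u ≠ 0 ∧ p u)).card =
      Fintype.card Fˣ * (Pr.filter p).card := by
  rw [← Finset.card_univ, ← Finset.card_product]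
  symm
  refine Finset.card_bij (fun cv _ => (cv.1 : F) • cv.2) ?_ ?_ ?_
  · rintro ⟨c, v⟩ h
    simp only [Finset.mem_product, Finset.mem_univ, true_and, Finset.mem_filter] at h ⊢
    refine ⟨?_, (hp c v).2 h.2⟩
    exact smul_ne_zero c.ne_zero (hPr0 v h.1)
  · rintro ⟨c, v⟩ h ⟨c', v'⟩ h' e
    simp only [Finset.mem_product, Finset.mem_univ, true_and, Finset.mem_filter] at h h' e
    have hne : (c : F) • v ≠ 0 := smul_ne_zero c.ne_zero (hPr0 v h.1)
    have hv : v = v' := (hPr _ hne).unique ⟨h.1, c, rfl⟩ ⟨h'.1, c', e⟩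
    subst hv
    have := smul_left_injective F (hPr0 v h.1) e
    simp only [Prod.mk.injEq, and_true]
    exact Units.ext this
  · intro u hu
    simp only [Finset.mem_filter, Finset.mem_univ, true_and] at hu
    obtain ⟨v, ⟨hv, c, rfl⟩, _⟩ := hPr u hu.1
    refine ⟨(c, v), ?_, rfl⟩
    simp only [Finset.mem_product, Finset.mem_univ, true_and, Finset.mem_filter]
    exact ⟨hv, (hp c v).1 hu.2⟩

lemma fstar_smul (f : (Fin n → F) → ℕ) (c : Fˣ) (u : Fin n → F) :
    fstarF f ((c : F) • u) = fstarF f u := by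
  unfold fstarF
  congr 1
  ext a
  refine Fintype.sum_equiv (Equiv.mulRight₀ (c : F) c.ne_zero) _ _ ?_
  intro t
  simp [smul_smul]

lemma sum_conv (φ : ℕ → ℝ) (a b : ℕ) :
    ∑ j ∈ Finset.Icc ((a : ℤ)) ((b : ℤ) - 1), φ j.toNat = ∑ j ∈ Finset.Ico a b, φ j := by
  symm
  refine Finset.sum_bij (fun j _ => (j : ℤ)) ?_ ?_ ?_ ?_
  · intro j hj
    rw [Finset.mem_Ico] at hj
    rw [Finset.mem_Icc]
    omega
  · intro i _ j _ h
    exact_mod_cast h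
  · intro j hj
    rw [Finset.mem_Icc] at hj
    refine ⟨j.toNat, ?_, ?_⟩
    · rw [Finset.mem_Ico]; omega
    · omega
  · intro j _
    simp

lemma tele (v φ : ℕ → ℝ) (e : ℝ) (a b : ℕ) (hab : a ≤ b)
    (h : ∀ j < b, v j + e * φ j ≤ v (j + 1)) :
    v a + e * ∑ j ∈ Finset.Ico a b, φ j ≤ v b := by
  induction b, hab using Nat.le_induction with
  | base => simp
  | succ b hab ih =>
    rw [Finset.sum_Ico_succ_top hab, mul_add]
    have h1 := ih (fun j hj => h j (by omega))
    have h2 := h b (by omega)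
    linarith

lemma r_eq (q m i : ℕ) (hq : 1 ≤ q) :
    ⌈((m * i + 1 : ℕ) : ℝ) / (2 * (q : ℝ) - 1) - 1⌉ = ((m * i / (2 * q - 1) : ℕ) : ℤ) := by
  obtain ⟨c, hc, hc'⟩ : ∃ c : ℕ, c = 2 * q - 1 ∧ (2 * (q : ℝ) - 1) = c := by
    refine ⟨2 * q - 1, rfl, ?_⟩
    rw [Nat.cast_sub (by omega)]
    push_cast; ring
  have hc0 : 0 < c := by omega
  have hcr : (0 : ℝ) < c := by exact_mod_cast hc0
  rw [hc', ← hc, Int.ceil_eq_iff]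
  generalize m * i = N
  have h1 : N / c * c < N + 1 := Nat.lt_succ_of_le (Nat.div_mul_le_self N c)
  have h2 : N + 1 ≤ (N / c + 1) * c := by
    have := Nat.lt_div_mul_add (a := N) hc0
    rw [add_mul, one_mul]; omega
  generalize N / c = k at *
  constructor
  · have : ((k : ℕ) : ℝ) < ((N + 1 : ℕ) : ℝ) / c := by
      rw [lt_div_iff₀ hcr]
      exact_mod_cast h1
    simpa using this
  · have : ((N + 1 : ℕ) : ℝ) / c ≤ ((k + 1 : ℕ) : ℝ) := by
      rw [div_le_iff₀ hcr]
      exact_mod_cast h2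
    push_cast at this ⊢
    linarith

end fin
end S8

theorem stmt8 (F : Type) [Field F] [Fintype F] [DecidableEq F] (n : ℕ) (hn : 1 ≤ n)
    (q : ℕ) (hq : q = Fintype.card F)
    (Pr : Finset (Fin n → F)) (hPr0 : ∀ u ∈ Pr, u ≠ 0)
    (hPr : ∀ u : Fin n → F, u ≠ 0 → ∃! v, v ∈ Pr ∧ ∃ c : Fˣ, u = (c : F) • v)
    (f : (Fin n → F) → ℕ)
    (w : ℕ) (hw : w = Pr.sup (fstarF f))
    (m : ℕ) (hm : 2 * q ≤ m)
    (r : ℕ → ℤ) (hr : ∀ i : ℕ, r i = ⌈((m * i + 1 : ℕ) : ℝ) / (2 * (q : ℝ) - 1) - 1⌉)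
    (d : ℕ → ℤ) (hd : ∀ i : ℕ, d i = r i * (q : ℤ) - 1) :
    ∑ i ∈ Finset.Icc 1 w,
        (((Pr.filter fun u => i ≤ fstarF f u).card : ℝ) / (Pr.card : ℝ)) *
          ∑ j ∈ Finset.Icc (d (i - 1) + 1) (d i), ((j.toNat + n - 1).choose (n - 1) : ℝ)
      ≤ ∑ x : Fin n → F, ((m * f x + n - 1).choose n : ℝ) := by
  have hq1 : 1 ≤ q := by rw [hq]; exact Fintype.card_pos
  set ρ : ℕ → ℕ := fun i => m * i / (2 * q - 1) with hρ
  have hd' : ∀ i, d i = ((ρ i * q : ℕ) : ℤ) - 1 := by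
    intro i
    rw [hd, hr, S8.r_eq q m i hq1]
    push_cast
    rfl
  set g : (Fin n → F) → ℕ := fun x => m * f x with hg
  set v : ℕ → ℝ := fun D =>
    (Module.finrank F ((S8.low D : Submodule F (MvPolynomial (Fin n) F)).map (S8.Ev g)) : ℝ) with hv
  have hU := S8.count Pr hPr0 hPr (fun _ => True) (fun _ _ => Iff.rfl)
  simp only [and_true, Finset.filter_true] at hU
  have hu : 0 < Fintype.card Fˣ := Fintype.card_pos
  have hPrpos : 0 < Pr.card := by
    obtain ⟨x, ⟨hx, _⟩, _⟩ := hPr (fun _ => 1) (fun h => one_ne_zero (congrFun h ⟨0, hn⟩))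
    exact Finset.card_pos.2 ⟨x, hx⟩
  have key : ∀ w' : ℕ, ∑ i ∈ Finset.Icc 1 w',
        (((Pr.filter fun u => i ≤ fstarF f u).card : ℝ) / (Pr.card : ℝ)) *
          ∑ j ∈ Finset.Icc (d (i - 1) + 1) (d i), ((j.toNat + n - 1).choose (n - 1) : ℝ)
      ≤ v (ρ w' * q) := by
    intro w'
    induction w' with
    | zero => simp [hv]
    | succ i ih =>
      rw [Finset.sum_Icc_succ_top (by omega)]
      refine (add_le_add_left ih _).trans ?_
      rw [Nat.add_sub_cancel, hd' i, hd' (i + 1), sub_add_cancel,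
        S8.sum_conv (fun j => ((j + n - 1).choose (n - 1) : ℝ))]
      apply S8.tele v
      · exact Nat.mul_le_mul_right _ (Nat.div_le_div_right (Nat.mul_le_mul_left _ (by omega)))
      · intro D hD
        have hT := S8.count Pr hPr0 hPr (fun u => i + 1 ≤ fstarF f u)
          (fun c u => by rw [S8.fstar_smul])
        have hs := S8.stepV hn g D (ρ (i + 1)) (by rw [← hq]; exact hD)
          ((Finset.univ : Finset (Fin n → F)).filter (fun u => u ≠ 0 ∧ i + 1 ≤ fstarF f u))
          (fun u hu => by
            simp only [Finset.mem_filter, Finset.mem_univ, true_and] at hu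
            exact hu.1)
          (fun u hu => by
            simp only [Finset.mem_filter, Finset.mem_univ, true_and] at hu
            obtain ⟨a, _, ha⟩ := Finset.exists_mem_eq_sup (Finset.univ : Finset (Fin n → F))
              Finset.univ_nonempty (fun a : Fin n → F => ∑ t : F, f (a + t • u))
            refine ⟨a, ?_⟩
            have h2 : i + 1 ≤ ∑ t : F, f (a + t • u) := by
              have := hu.2
              unfold fstarF at this
              rw [ha] at this
              exact this
            rw [← hq]
            calc (2 * q - 1) * ρ (i + 1) ≤ m * (i + 1) := Nat.mul_div_le _ _
              _ ≤ m * ∑ t : F, f (a + t • u) := Nat.mul_le_mul_left _ h2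
              _ = _ := by rw [hg, Finset.mul_sum])
        rw [hT, hU, mul_assoc, mul_assoc, mul_assoc, ← mul_add] at hs
        have hs' := Nat.le_of_mul_le_mul_left hs hu
        have hs2 : (Pr.card : ℝ) * v D + ((Pr.filter fun u => i + 1 ≤ fstarF f u).card : ℝ) *
            ((D + n - 1).choose (n - 1) : ℝ) ≤ (Pr.card : ℝ) * v (D + 1) := by
          simp only [hv]
          exact_mod_cast hs'
        have hp : (0 : ℝ) < Pr.card := by exact_mod_cast hPrpos
        rw [← mul_le_mul_iff_right₀ hp]
        refine le_trans (le_of_eq ?_) hs2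
        field_simp
  refine (key w).trans ?_
  have h1 := (Submodule.finrank_le ((S8.low (ρ w * q) :
    Submodule F (MvPolynomial (Fin n) F)).map (S8.Ev g))).trans (S8.finrank_Y hn g)
  simp only [hv]
  exact_mod_cast h1
end
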